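/- arXiv:1503.04954 — 2 statements merged into one kernel-verified Lean document; each statement's English description precedes it below -/
import Mathlib

section
/- Let N ≥ 2 be an integer, 0 < R₁ < R₂, and let Q : [R₁,R₂] → ℝ be continuous satisfying (q1) and (q2). Let g satisfy (g1), be regularly oscillating at zero, and satisfy lim_{s→0⁺} g(s)/s = 0 and liminf_{s→+∞} g(s)/s > 0. Then there exists ν* > 0 such that for every ν > ν* there exists a C² function w : [R₁,R₂] → ℝ with w(r) > 0 for all r ∈ [R₁,R₂], w''(r) + ((N−1)/r) w'(r) + ν Q(r) g(w(r)) = 0 for all r ∈ [R₁,R₂], and w'(R₁) = w'(R₂) = 0; that is, the Neumann problem −Δu = ν Q(‖x‖) g(u) on the annulus {x ∈ ℝᴺ : R₁ < ‖x‖ < R₂} has at least one positive radially symmetric solution u(x) = w(‖x‖) for each ν > ν*. -/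
open MeasureTheory Set Filter

/-- The Neumann problem for the radial equation
`w'' + ((N−1)/r) w' + Q(r) g(w) = 0` on `[R₁,R₂]` has a positive `C²` solution,
i.e. the Neumann problem `−Δu = Q(‖x‖) g(u)` on the annulus has a positive
radially symmetric solution `u(x) = w(‖x‖)`. -/
def RadialNeumannPosSol (N : ℕ) (R₁ R₂ : ℝ) (Q g : ℝ → ℝ) : Prop :=
  ∃ w w' w'' : ℝ → ℝ,
    (∀ r ∈ Icc R₁ R₂, HasDerivWithinAt w (w' r) (Icc R₁ R₂) r) ∧
    (∀ r ∈ Icc R₁ R₂, HasDerivWithinAt w' (w'' r) (Icc R₁ R₂) r) ∧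
    ContinuousOn w'' (Icc R₁ R₂) ∧
    (∀ r ∈ Icc R₁ R₂, 0 < w r) ∧
    (∀ r ∈ Icc R₁ R₂, w'' r + (((N : ℝ) - 1) / r) * w' r + Q r * g (w r) = 0) ∧
    w' R₁ = 0 ∧ w' R₂ = 0

/-- Condition (q1): there are `m ≥ 1` pairwise disjoint closed intervals in
`[R₁,R₂]` on which `Q ≥ 0` with `max Q > 0`, while `Q ≤ 0` outside them. -/
def CondQ1 (R₁ R₂ : ℝ) (Q : ℝ → ℝ) : Prop :=
  ∃ (m : ℕ) (σ τ : Fin m → ℝ), 0 < m ∧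
    (∀ i, R₁ ≤ σ i ∧ σ i ≤ τ i ∧ τ i ≤ R₂) ∧
    (Pairwise fun i j => Disjoint (Icc (σ i) (τ i)) (Icc (σ j) (τ j))) ∧
    (∀ i, ∀ r ∈ Icc (σ i) (τ i), 0 ≤ Q r) ∧
    (∀ i, ∃ r ∈ Icc (σ i) (τ i), 0 < Q r) ∧
    (∀ r ∈ Icc R₁ R₂ \ ⋃ i, Icc (σ i) (τ i), Q r ≤ 0)

/-- Condition (g1): `g : [0,∞) → [0,∞)` is continuous, `g 0 = 0`, `g > 0` on `(0,∞)`. -/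
def CondG1 (g : ℝ → ℝ) : Prop :=
  ContinuousOn g (Ici (0:ℝ)) ∧ (∀ s : ℝ, 0 ≤ s → 0 ≤ g s) ∧ g 0 = 0 ∧
    ∀ s : ℝ, 0 < s → 0 < g s

/-- `g` is regularly oscillating at zero. -/
def RegOscAtZero (g : ℝ → ℝ) : Prop :=
  ∀ ε : ℝ, 0 < ε → ∃ δ > (0:ℝ), ∃ η > (0:ℝ), ∀ s ω : ℝ,
    0 < s → s < δ → |ω - 1| < η → |g (ω * s) / g s - 1| < ε

/-- `liminf_{s → +∞} g(s)/s`, computed in `EReal`. -/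
noncomputable def GrowthLiminf (g : ℝ → ℝ) : EReal :=
  liminf (fun s : ℝ => ((g s / s : ℝ) : EReal)) atTop

/-- `limsup_{s → +∞} g(s)/s`, computed in `EReal`. -/
noncomputable def GrowthLimsup (g : ℝ → ℝ) : EReal :=
  limsup (fun s : ℝ => ((g s / s : ℝ) : EReal)) atTop

lemma aux_tele_ge (u : ℕ → ℝ) (z : ℝ) (i j : ℕ) (hij : i ≤ j)
    (H : ∀ k, i ≤ k → k < j → z ≤ u (k+1) - u k) : ((j:ℝ) - i) * z ≤ u j - u i := by
  induction j, hij using Nat.le_induction with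
  | base => simp
  | succ m hm ih =>
    have h1 := ih (fun k h1 h2 => H k h1 (by omega))
    have h2 := H m hm (by omega)
    push_cast
    nlinarith

lemma aux_tele_le (u : ℕ → ℝ) (z : ℝ) (i j : ℕ) (hij : i ≤ j)
    (H : ∀ k, i ≤ k → k < j → u (k+1) - u k ≤ z) : u j - u i ≤ ((j:ℝ) - i) * z := by
  have := aux_tele_ge (fun k => - u k) (-z) i j hij (fun k h1 h2 => by have := H k h1 h2; linarith)
  linarith

lemma aux_hump (w y β : ℕ → ℝ) (h l1 l2 e L M D : ℝ) (A B j ks ka km kb ke : ℕ)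
    (h0 : 0 < h) (hl1 : 0 < l1) (hl2 : 0 < l2) (he : 0 < e) (hL : 0 < L) (hM : 0 < M) (hD : 0 < D)
    (hA : A ≤ ks) (hsa : ks ≤ ka) (ham : ka ≤ km) (hmb : km ≤ kb) (hbe : kb ≤ ke) (hB : ke ≤ B)
    (hAj : A ≤ j) (hjB : j ≤ B)
    (hw : ∀ k, A ≤ k → k ≤ B → 0 < w k)
    (hmax : ∀ k, A ≤ k → k ≤ B → w k ≤ w j)
    (hy : ∀ k, A ≤ k → k ≤ B → y (k+1) ≤ y k)
    (hβ : ∀ k, A ≤ k → k ≤ B → w (k+1) - w k = β k * y (k+1))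
    (hβ1 : ∀ k, A ≤ k → k ≤ B → h * l1 ≤ β k)
    (hβ2 : ∀ k, A ≤ k → k ≤ B → β k ≤ h * l2)
    (s1 : e ≤ ((ka:ℝ) - ks) * h) (s2 : e ≤ ((km:ℝ) - ka) * h)
    (s3 : e ≤ ((kb:ℝ) - km) * h) (s4 : e ≤ ((ke:ℝ) - kb) * h)
    (sL : ((B:ℝ) - A) * h ≤ L)
    (drop : ∀ k, ka ≤ k → k ≤ kb → M ≤ w k → D * h * w k ≤ y k - y (k+1))
    (hbig : (1 + L * l2 / (e * l1)) < D * e * e * l1) :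
    w j ≤ (1 + L * l2 / (e * l1)) * M := by
  set T := 1 + L * l2 / (e * l1) with hT
  have hT1 : 1 ≤ T := by
    have : 0 < L * l2 / (e * l1) := by positivity
    linarith
  have hTpos : 0 < T := by linarith
  have anti : ∀ a b, A ≤ a → a ≤ b → b ≤ B + 1 → y b ≤ y a := by
    intro a b ha hab
    induction b, hab using Nat.le_induction with
    | base => intro _; exact le_rfl
    | succ m hm ih =>
      intro hb
      exact (hy m (by omega) (by omega)).trans (ih (by omega))
  have hβ0 : ∀ k, A ≤ k → k ≤ B → 0 < β k := fun k h1 h2 =>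
    lt_of_lt_of_le (by positivity) (hβ1 k h1 h2)
  -- increments
  have L1 : ∀ i k s, A ≤ i → i ≤ k → k ≤ B → 0 ≤ s → (∀ l, i ≤ l → l < k → s ≤ y (l+1)) →
      ((k:ℝ) - i) * h * (l1 * s) ≤ w k - w i := by
    intro i k s hi hik hk hs H
    have := aux_tele_ge w (h * l1 * s) i k hik (fun l h1 h2 => by
      rw [hβ l (by omega) (by omega)]
      have a1 := hβ1 l (by omega) (by omega)
      have a2 := H l h1 h2
      exact mul_le_mul a1 a2 hs (hβ0 l (by omega) (by omega)).le)
    linarith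
  have L2 : ∀ i k s, A ≤ i → i ≤ k → k ≤ B → 0 ≤ s → (∀ l, i ≤ l → l < k → y (l+1) ≤ s) →
      w k - w i ≤ ((k:ℝ) - i) * h * (l2 * s) := by
    intro i k s hi hik hk hs H
    have := aux_tele_le w (h * l2 * s) i k hik (fun l h1 h2 => by
      rw [hβ l (by omega) (by omega)]
      have a1 := hβ2 l (by omega) (by omega)
      have a2 := H l h1 h2
      have a3 := hβ0 l (by omega) (by omega)
      calc β l * y (l+1) ≤ β l * s := mul_le_mul_of_nonneg_left a2 a3.le
        _ ≤ _ := mul_le_mul_of_nonneg_right a1 hs)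
    linarith
  have L3 : ∀ i k s, A ≤ i → i ≤ k → k ≤ B → 0 ≤ s → (∀ l, i ≤ l → l < k → y (l+1) ≤ -s) →
      w k - w i ≤ -(((k:ℝ) - i) * h * (l1 * s)) := by
    intro i k s hi hik hk hs H
    have := aux_tele_le w (-(h * l1 * s)) i k hik (fun l h1 h2 => by
      rw [hβ l (by omega) (by omega)]
      have a1 := hβ1 l (by omega) (by omega)
      have a2 := H l h1 h2
      have := mul_le_mul a1 (by linarith : s ≤ - y (l+1)) hs (hβ0 l (by omega) (by omega)).le
      linarith)
    linarith
  have L4 : ∀ i k s, A ≤ i → i ≤ k → k ≤ B → 0 ≤ s → (∀ l, i ≤ l → l < k → -s ≤ y (l+1)) →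
      -(((k:ℝ) - i) * h * (l2 * s)) ≤ w k - w i := by
    intro i k s hi hik hk hs H
    have := aux_tele_ge w (-(h * l2 * s)) i k hik (fun l h1 h2 => by
      rw [hβ l (by omega) (by omega)]
      have a1 := hβ2 l (by omega) (by omega)
      have a2 := H l h1 h2
      have a3 := hβ0 l (by omega) (by omega)
      have b1 : β l * (-y (l+1)) ≤ β l * s := mul_le_mul_of_nonneg_left (by linarith) a3.le
      have b2 := mul_le_mul_of_nonneg_right a1 hs
      linarith)
    linarith
  have span : ∀ i k : ℕ, A ≤ i → k ≤ B → ((k:ℝ) - i) * h ≤ L := by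
    intro i k hi hk
    have h1 : (A:ℝ) ≤ i := by exact_mod_cast hi
    have h2 : (k:ℝ) ≤ B := by exact_mod_cast hk
    exact (mul_le_mul_of_nonneg_right (by linarith) h0.le).trans sL
  have fin : ∀ v s : ℝ, 0 ≤ s → e * (l1 * s) ≤ v → w j ≤ v + L * (l2 * s) → w j ≤ T * v := by
    intro v s hs h1 h2
    have h3 : L * (l2 * s) ≤ L * l2 / (e * l1) * v := by
      rw [div_mul_eq_mul_div, le_div_iff₀ (by positivity)]
      have : 0 < L * l2 := by positivity
      nlinarith
    rw [hT]; linarith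
  have claim : ∀ k, ka ≤ k → k ≤ kb → w j ≤ T * w k := by
    intro k hk1 hk2
    have hwk := hw k (by omega) (by omega)
    rcases le_or_gt j k with hjk | hjk
    · rcases le_or_gt 0 (y (k+1)) with hy0 | hy0
      · have := L1 j k 0 hAj hjk (by omega) le_rfl (fun l h1 h2 =>
          hy0.trans (anti (l+1) (k+1) (by omega) (by omega) (by omega)))
        nlinarith
      · have a1 := L3 k ke (-y (k+1)) (by omega) (by omega) hB (by linarith) (fun l h1 h2 => by
          have := anti (k+1) (l+1) (by omega) (by omega) (by omega); linarith)
        have a2 := L4 j k (-y (k+1)) hAj hjk (by omega) (by linarith) (fun l h1 h2 => by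
          have := anti (l+1) (k+1) (by omega) (by omega) (by omega); linarith)
        have a3 := hw ke (by omega) hB
        have a4 : e ≤ ((ke:ℝ) - k) * h := by
          have : (k:ℝ) ≤ kb := by exact_mod_cast hk2
          nlinarith
        have a5 := span j k hAj (by omega)
        refine fin (w k) (-y (k+1)) (by linarith) ?_ ?_
        · have : 0 ≤ l1 * (-y (k+1)) := mul_nonneg hl1.le (by linarith)
          have := mul_le_mul_of_nonneg_right a4 this
          linarith
        · have : 0 ≤ l2 * (-y (k+1)) := mul_nonneg hl2.le (by linarith)
          have := mul_le_mul_of_nonneg_right a5 this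
          linarith
    · rcases le_or_gt (y (k+1)) 0 with hy0 | hy0
      · have := L2 k j 0 (by omega) hjk.le hjB le_rfl (fun l h1 h2 =>
          (anti (k+1) (l+1) (by omega) (by omega) (by omega)).trans hy0)
        nlinarith
      · have a1 := L1 ks k (y (k+1)) (by omega) (by omega) (by omega) hy0.le (fun l h1 h2 =>
          anti (l+1) (k+1) (by omega) (by omega) (by omega))
        have a2 := L2 k j (y (k+1)) (by omega) hjk.le hjB hy0.le (fun l h1 h2 =>
          anti (k+1) (l+1) (by omega) (by omega) (by omega))
        have a3 := hw ks hA (by omega)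
        have a4 : e ≤ ((k:ℝ) - ks) * h := by
          have : (ka:ℝ) ≤ k := by exact_mod_cast hk1
          nlinarith
        have a5 := span k j (by omega) hjB
        refine fin (w k) (y (k+1)) hy0.le ?_ ?_
        · have : 0 ≤ l1 * (y (k+1)) := mul_nonneg hl1.le hy0.le
          have := mul_le_mul_of_nonneg_right a4 this
          linarith
        · have : 0 ≤ l2 * (y (k+1)) := mul_nonneg hl2.le hy0.le
          have := mul_le_mul_of_nonneg_right a5 this
          linarith
  by_contra hcon
  push Not at hcon
  set K := w j with hK
  have hKpos : 0 < K := lt_trans (by positivity) hcon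
  set S := e * (D * (K / T)) with hS
  have hSpos : 0 < S := by positivity
  have dr : ∀ k, ka ≤ k → k ≤ kb → y (k+1) - y k ≤ -(h * (D * (K / T))) := by
    intro k h1 h2
    have c1 := claim k h1 h2
    have c2 : M ≤ w k := by
      by_contra hlt
      push Not at hlt
      have : T * w k < T * M := mul_lt_mul_of_pos_left hlt hTpos
      linarith
    have c3 := drop k h1 h2 c2
    have c4 : K / T ≤ w k := by rw [div_le_iff₀ hTpos]; linarith
    have c5 : D * h * (K / T) ≤ D * h * w k := mul_le_mul_of_nonneg_left c4 (by positivity)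
    linarith
  have hDK : 0 < D * (K / T) := by positivity
  have hbig2 : K < e * (l1 * S) := by
    have : e * (l1 * S) = (D * e * e * l1) * K / T := by rw [hS]; ring
    rw [this, lt_div_iff₀ hTpos]
    nlinarith
  have d1 : y km - y ka ≤ -S := by
    have := aux_tele_le y _ ka km ham (fun k h1 h2 => dr k h1 (by omega))
    have := mul_le_mul_of_nonneg_right s2 hDK.le
    rw [hS]; linarith
  have d2 : y kb - y km ≤ -S := by
    have := aux_tele_le y _ km kb hmb (fun k h1 h2 => dr k (by omega) (by omega))
    have := mul_le_mul_of_nonneg_right s3 hDK.le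
    rw [hS]; linarith
  rcases le_or_gt 0 (y km) with hm | hm
  · have a1 := L1 ks ka S hA hsa (by omega) hSpos.le (fun l h1 h2 => by
      have := anti (l+1) ka (by omega) (by omega) (by omega); linarith)
    have a2 := hw ks hA (by omega)
    have a3 := hmax ka (by omega) (by omega)
    have := mul_le_mul_of_nonneg_right s1 (by positivity : 0 ≤ l1 * S)
    linarith
  · have a1 := L3 kb ke S (by omega) hbe hB hSpos.le (fun l h1 h2 => by
      have := anti kb (l+1) (by omega) (by omega) (by omega); linarith)
    have a2 := hw ke (by omega) hB
    have a3 := hmax kb (by omega) (by omega)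
    have := mul_le_mul_of_nonneg_right s4 (by positivity : 0 ≤ l1 * S)
    linarith

noncomputable def auxSeq (c b : ℕ → ℝ) (G : ℝ → ℝ) (α : ℝ) : ℕ → ℝ × ℝ
  | 0 => (α, 0)
  | k + 1 => ((auxSeq c b G α k).1 + b k * ((auxSeq c b G α k).2 - c k * G (auxSeq c b G α k).1),
      (auxSeq c b G α k).2 - c k * G (auxSeq c b G α k).1)

lemma auxSeq_cont (c b : ℕ → ℝ) (G : ℝ → ℝ) (hG : Continuous G) (k : ℕ) :
    Continuous (fun α => auxSeq c b G α k) := by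
  induction k with
  | zero => simp only [auxSeq]; fun_prop
  | succ k ih =>
    simp only [auxSeq]
    fun_prop

lemma aux_shoot (c b : ℕ → ℝ) (G : ℝ → ℝ) (hG : Continuous G) (hG0 : G 0 = 0)
    (hb : ∀ k, 0 < b k) (n : ℕ) (hn : 0 < n) (α0 α1 : ℝ) (h0 : 0 < α0) (h01 : α0 ≤ α1)
    (hp : ∀ k < n, 0 < (auxSeq c b G α0 k).1) (hyp : 0 < (auxSeq c b G α0 n).2)
    (hneg : ¬ ∀ k < n, 0 < (auxSeq c b G α1 k).1) :
    ∃ α ∈ Icc α0 α1, (∀ k < n, 0 < (auxSeq c b G α k).1) ∧ (auxSeq c b G α n).2 = 0 := by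
  have hne : (Finset.range n).Nonempty := ⟨0, by simpa using hn⟩
  set m : ℝ → ℝ := fun α => min ((Finset.range n).inf' hne (fun k => (auxSeq c b G α k).1))
    (auxSeq c b G α n).2 with hm
  have hmc : Continuous m := by
    apply Continuous.min
    · exact Continuous.finset_inf'_apply hne (fun k _ => (auxSeq_cont c b G hG k).fst)
    · exact (auxSeq_cont c b G hG n).snd
  have hm0 : 0 ≤ m α0 := by
    refine le_min ?_ hyp.le
    rw [Finset.le_inf'_iff]
    intro k hk
    exact (hp k (by simpa using hk)).le
  have hm1 : m α1 ≤ 0 := by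
    push Not at hneg
    obtain ⟨k, hk, hk2⟩ := hneg
    exact (min_le_left _ _).trans ((Finset.inf'_le _ (by simpa using hk)).trans hk2)
  obtain ⟨α, hα, hmα⟩ := intermediate_value_Icc' h01 hmc.continuousOn ⟨hm1, hm0⟩
  have hαpos : 0 < α := lt_of_lt_of_le h0 hα.1
  set w : ℕ → ℝ := fun k => (auxSeq c b G α k).1 with hw
  set y : ℕ → ℝ := fun k => (auxSeq c b G α k).2 with hy
  have rw1 : ∀ k, w (k+1) = w k + b k * y (k+1) := fun k => by simp [hw, hy, auxSeq]
  have ry1 : ∀ k, y (k+1) = y k - c k * G (w k) := fun k => by simp [hw, hy, auxSeq]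
  have hw0 : w 0 = α := by simp [hw, auxSeq]
  have wn : ∀ k < n, 0 ≤ w k := by
    intro k hk
    have : (0:ℝ) ≤ (Finset.range n).inf' hne (fun k => (auxSeq c b G α k).1) := by
      rw [← hmα]; exact min_le_left _ _
    exact this.trans (Finset.inf'_le _ (by simpa using hk))
  have yn : 0 ≤ y n := by rw [← hmα]; exact min_le_right _ _
  have wp : ∀ k, k < n → 0 < w k := by
    intro k
    induction k with
    | zero => intro _; rw [hw0]; exact hαpos
    | succ k ih =>
      intro hk
      have h1 := ih (by omega)
      refine lt_of_le_of_ne (wn _ hk) (fun h2 => ?_)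
      have e1 := rw1 k
      have b1 := hb k
      have e2 : y (k+1) < 0 := by
        by_contra hc
        push Not at hc
        nlinarith
      have e3 : y (k+2) = y (k+1) := by
        have := ry1 (k+1)
        rw [← h2, hG0] at this
        simpa using this
      rcases Nat.lt_or_ge (k+2) n with h3 | h3
      · have e4 := wn _ h3
        have e5 := rw1 (k+1)
        have b2 := hb (k+1)
        rw [show k + 1 + 1 = k + 2 from rfl] at e5
        rw [e5, ← h2, e3] at e4
        nlinarith
      · have : n = k + 2 := by omega
        rw [this] at yn
        linarith
  refine ⟨α, hα, wp, ?_⟩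
  rcases min_choice ((Finset.range n).inf' hne (fun k => (auxSeq c b G α k).1))
    (auxSeq c b G α n).2 with h | h
  · exfalso
    obtain ⟨k, hk, hk2⟩ := Finset.exists_mem_eq_inf' hne (fun k => (auxSeq c b G α k).1)
    have h3 := wp k (by simpa using hk)
    have h4 : m α = w k := by
      rw [hm]; simp only; rw [h, hk2]
    rw [hmα] at h4
    linarith
  · rw [← h]; exact hmα

noncomputable def auxR (R₁ R₂ : ℝ) (n k : ℕ) : ℝ := R₁ + k * ((R₂ - R₁) / n)

def AuxDisc (p : ℝ → ℝ) (R₁ R₂ : ℝ) (Q G : ℝ → ℝ) (ν : ℝ) (n : ℕ) (w y : ℕ → ℝ) : Prop :=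
  (∀ k, y (k+1) = y k - ν * ((R₂ - R₁) / n) * (p (auxR R₁ R₂ n k) * Q (auxR R₁ R₂ n k)) * G (w k)) ∧
  (∀ k, w (k+1) = w k + (R₂ - R₁) / n / p (auxR R₁ R₂ n k) * y (k+1)) ∧ y 0 = 0

lemma auxR_mem (R₁ R₂ : ℝ) (h12 : R₁ < R₂) (n k : ℕ) (hn : 0 < n) (hk : k ≤ n) :
    auxR R₁ R₂ n k ∈ Icc R₁ R₂ := by
  have hn' : (0:ℝ) < n := by exact_mod_cast hn
  have hk' : (k:ℝ) ≤ n := by exact_mod_cast hk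
  have hL : 0 < (R₂ - R₁) / n := div_pos (by linarith) hn'
  have : (n:ℝ) * ((R₂ - R₁) / n) = R₂ - R₁ := by field_simp
  unfold auxR
  constructor
  · have : (0:ℝ) ≤ k * ((R₂ - R₁) / n) := by positivity
    linarith
  · nlinarith

lemma auxR_lt_iff (R₁ R₂ : ℝ) (h12 : R₁ < R₂) (n k l : ℕ) (hn : 0 < n) :
    auxR R₁ R₂ n k < auxR R₁ R₂ n l ↔ k < l := by
  have hn' : (0:ℝ) < n := by exact_mod_cast hn
  have hL : 0 < (R₂ - R₁) / n := div_pos (by linarith) hn'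
  unfold auxR
  rw [add_lt_add_iff_left, mul_lt_mul_iff_left₀ hL, Nat.cast_lt]

lemma auxR_le_iff (R₁ R₂ : ℝ) (h12 : R₁ < R₂) (n k l : ℕ) (hn : 0 < n) :
    auxR R₁ R₂ n k ≤ auxR R₁ R₂ n l ↔ k ≤ l := by
  rw [← not_lt, ← not_lt, auxR_lt_iff _ _ h12 _ _ _ hn]

lemma auxR_top (R₁ R₂ : ℝ) (n : ℕ) (hn : 0 < n) : auxR R₁ R₂ n n = R₂ := by
  have hn' : (0:ℝ) < n := by exact_mod_cast hn
  unfold auxR; field_simp; ring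

lemma auxR_pick (R₁ R₂ : ℝ) (h12 : R₁ < R₂) (n : ℕ) (hn : 0 < n) (t : ℝ) (ht : R₁ ≤ t) :
    ∃ k : ℕ, t ≤ auxR R₁ R₂ n k ∧ auxR R₁ R₂ n k ≤ t + (R₂ - R₁) / n := by
  have hn' : (0:ℝ) < n := by exact_mod_cast hn
  have hL : 0 < (R₂ - R₁) / n := div_pos (by linarith) hn'
  refine ⟨⌈(t - R₁) / ((R₂ - R₁) / n)⌉₊, ?_, ?_⟩
  · have := Nat.le_ceil ((t - R₁) / ((R₂ - R₁) / n))
    rw [div_le_iff₀ hL] at this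
    unfold auxR; linarith
  · have := Nat.ceil_lt_add_one (a := (t - R₁) / ((R₂ - R₁) / n)) (div_nonneg (by linarith) hL.le)
    have h2 := mul_le_mul_of_nonneg_right this.le hL.le
    rw [add_mul, div_mul_cancel₀ _ hL.ne'] at h2
    unfold auxR; linarith

lemma aux_mesh (L e : ℝ) (he : 0 < e) : ∃ n0 : ℕ, 0 < n0 ∧ ∀ n : ℕ, n0 ≤ n → L / n ≤ e := by
  obtain ⟨m, hm⟩ := exists_nat_ge (L / e)
  refine ⟨m + 1, by omega, fun n hn => ?_⟩
  have h1 : (m:ℝ) ≤ n := by exact_mod_cast (by omega : m ≤ n)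
  have h2 : (0:ℝ) < n := by exact_mod_cast (by omega : 0 < n)
  rw [div_le_iff₀ h2]
  rw [div_le_iff₀ he] at hm
  nlinarith

lemma aux_hump_i (p : ℝ → ℝ) (R₁ R₂ P1 P2 : ℝ) (Q G : ℝ → ℝ) (h12 : R₁ < R₂)
    (hP1 : 0 < P1) (hp1 : ∀ r ∈ Icc R₁ R₂, P1 ≤ p r) (hp2 : ∀ r ∈ Icc R₁ R₂, p r ≤ P2)
    (hG : ∀ s, 0 ≤ G s) (lam M : ℝ) (hlam : 0 < lam) (hM : 0 < M)
    (hGM : ∀ s, M ≤ s → lam * s ≤ G s)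
    (σ τ x e q : ℝ) (h1 : R₁ ≤ σ) (h2 : σ ≤ x) (h3 : x + 10 * e ≤ τ) (h4 : τ ≤ R₂)
    (he : 0 < e) (hq : 0 < q)
    (hQ0 : ∀ r ∈ Icc σ τ, 0 ≤ Q r) (hQq : ∀ r ∈ Icc x (x + 10 * e), q ≤ Q r) :
    ∃ ν0 : ℝ, 0 < ν0 ∧ ∃ K : ℝ, ∃ n0 : ℕ, ∀ ν : ℝ, ν0 < ν → ∀ n : ℕ, n0 ≤ n → ∀ w y,
      AuxDisc p R₁ R₂ Q G ν n w y → (∀ k < n, 0 < w k) → ∀ j < n,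
      auxR R₁ R₂ n j ∈ Icc σ τ → w j ≤ K := by
  obtain ⟨n0, hn0, hmesh⟩ := aux_mesh (R₂ - R₁) e he
  have hP2 : 0 < P2 := lt_of_lt_of_le hP1
    ((hp1 R₁ ⟨le_rfl, h12.le⟩).trans (hp2 R₁ ⟨le_rfl, h12.le⟩))
  have hL : 0 < R₂ - R₁ := by linarith
  set T := 1 + (R₂ - R₁) * (1 / P1) / (e * (1 / P2)) with hT
  have hTpos : 0 < T := by positivity
  refine ⟨T / (P1 * q * lam * e * e * (1 / P2)), by positivity, T * M, n0, ?_⟩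
  intro ν hν n hn w y ⟨ry, rw', y0⟩ hw j0 hj0n hj0
  have hnpos : 0 < n := by omega
  have hn' : (0:ℝ) < n := by exact_mod_cast hnpos
  have hνpos : 0 < ν := lt_trans (by positivity) hν
  set h := (R₂ - R₁) / n with hh
  have hpos : 0 < h := div_pos hL hn'
  have hhe : h ≤ e := hmesh n hn
  -- pick max
  classical
  set I := (Finset.range n).filter (fun k => auxR R₁ R₂ n k ∈ Icc σ τ) with hI
  obtain ⟨j, hjI, hjmax⟩ := Finset.exists_max_image I w ⟨j0, by simp [hI, hj0n]; exact hj0⟩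
  have hjn : j < n ∧ auxR R₁ R₂ n j ∈ Icc σ τ := by
    rw [hI, Finset.mem_filter, Finset.mem_range] at hjI; exact hjI
  suffices hs : w j ≤ T * M from
    (hjmax j0 (by rw [hI, Finset.mem_filter, Finset.mem_range]; exact ⟨hj0n, hj0⟩)).trans hs
  obtain ⟨ks, ks1, ks2⟩ := auxR_pick R₁ R₂ h12 n hnpos x (by linarith)
  obtain ⟨ka, ka1, ka2⟩ := auxR_pick R₁ R₂ h12 n hnpos (x + 2 * e) (by linarith)
  obtain ⟨km, km1, km2⟩ := auxR_pick R₁ R₂ h12 n hnpos (x + 4 * e) (by linarith)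
  obtain ⟨kb, kb1, kb2⟩ := auxR_pick R₁ R₂ h12 n hnpos (x + 6 * e) (by linarith)
  obtain ⟨ke, ke1, ke2⟩ := auxR_pick R₁ R₂ h12 n hnpos (x + 8 * e) (by linarith)
  rw [← hh] at ks2 ka2 km2 kb2 ke2
  have mono := fun k l => auxR_le_iff R₁ R₂ h12 n k l hnpos
  have monolt := fun k l => auxR_lt_iff R₁ R₂ h12 n k l hnpos
  have sa : ks ≤ ka := (mono _ _).1 (by linarith)
  have am : ka ≤ km := (mono _ _).1 (by linarith)
  have mb : km ≤ kb := (mono _ _).1 (by linarith)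
  have be : kb ≤ ke := (mono _ _).1 (by linarith)
  have ken : ke < n := (monolt _ _).1 (by rw [auxR_top _ _ _ hnpos]; linarith)
  have diff : ∀ k l : ℕ, auxR R₁ R₂ n l - auxR R₁ R₂ n k = ((l:ℝ) - k) * h := by
    intro k l; unfold auxR; rw [← hh]; ring
  have inI : ∀ k, min ks j ≤ k → k ≤ max ke j → k < n ∧ auxR R₁ R₂ n k ∈ Icc σ τ := by
    intro k a1 a2
    refine ⟨by omega, ?_, ?_⟩
    · rcases min_le_iff.1 a1 with a | a
      · have := (mono _ _).2 a; linarith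
      · have := (mono _ _).2 a; exact hjn.2.1.trans this
    · rcases le_max_iff.1 a2 with a | a
      · have := (mono _ _).2 a; linarith
      · have := (mono _ _).2 a; exact this.trans hjn.2.2
  have inR : ∀ k, k < n → auxR R₁ R₂ n k ∈ Icc R₁ R₂ := fun k hk =>
    auxR_mem R₁ R₂ h12 n k hnpos hk.le
  refine aux_hump w y (fun k => h / p (auxR R₁ R₂ n k)) h (1 / P2) (1 / P1) e (R₂ - R₁) M
    (ν * P1 * q * lam) (min ks j) (max ke j) j ks ka km kb ke hpos (by positivity) (by positivity)
    he hL hM (by positivity) (min_le_left _ _) sa am mb be (le_max_left _ _) (min_le_right _ _)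
    (le_max_right _ _) ?_ ?_ ?_ ?_ ?_ ?_ ?_ ?_ ?_ ?_ ?_ ?_ ?_
  · intro k a1 a2; exact hw k (inI k a1 a2).1
  · intro k a1 a2
    apply hjmax
    rw [hI, Finset.mem_filter, Finset.mem_range]; exact inI k a1 a2
  · intro k a1 a2
    obtain ⟨b1, b2⟩ := inI k a1 a2
    have c1 := hQ0 _ b2
    have c2 := hp1 _ (inR k b1)
    have c3 := hG (w k)
    rw [ry k]
    have : 0 ≤ ν * h * (p (auxR R₁ R₂ n k) * Q (auxR R₁ R₂ n k)) * G (w k) := by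
      have : 0 ≤ p (auxR R₁ R₂ n k) := by linarith
      positivity
    linarith
  · intro k _ _; rw [rw' k]; ring
  · intro k a1 a2
    obtain ⟨b1, b2⟩ := inI k a1 a2
    have c2 := hp1 _ (inR k b1)
    have c3 := hp2 _ (inR k b1)
    rw [mul_one_div]
    exact div_le_div_of_nonneg_left hpos.le (by linarith) c3
  · intro k a1 a2
    obtain ⟨b1, b2⟩ := inI k a1 a2
    have c2 := hp1 _ (inR k b1)
    rw [mul_one_div]
    exact div_le_div_of_nonneg_left hpos.le hP1 c2
  · rw [← diff]; linarith
  · rw [← diff]; linarith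
  · rw [← diff]; linarith
  · rw [← diff]; linarith
  · rw [← diff]
    have c1 := (inI (max ke j) (by omega) le_rfl).2.2
    have c2 := (inI (min ks j) le_rfl (by omega)).2.1
    linarith
  · intro k a1 a2 a3
    rw [ry k]
    have b1 : k < n := by omega
    have c0 : q ≤ Q (auxR R₁ R₂ n k) := hQq _ ⟨by have := (mono _ _).2 a1; linarith,
      by have := (mono _ _).2 a2; linarith⟩
    have c2 := hp1 _ (inR k b1)
    have c3 := hGM _ a3
    have c4 : P1 * q ≤ p (auxR R₁ R₂ n k) * Q (auxR R₁ R₂ n k) :=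
      mul_le_mul c2 c0 hq.le (by linarith)
    have c5 : ν * h * (P1 * q) * (lam * w k) ≤
        ν * h * (p (auxR R₁ R₂ n k) * Q (auxR R₁ R₂ n k)) * G (w k) := by
      have : 0 < w k := by linarith
      have : 0 < P1 * q := by positivity
      apply mul_le_mul _ c3 (by positivity) (by
        have : 0 ≤ p (auxR R₁ R₂ n k) * Q (auxR R₁ R₂ n k) := by linarith
        positivity)
      exact mul_le_mul_of_nonneg_left c4 (by positivity)
    linarith
  · rw [← hT]
    rw [div_lt_iff₀ (by positivity)] at hν
    linarith

/-- Local structure of positive humps. -/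
lemma aux_core (R₁ R₂ : ℝ) (h12 : R₁ < R₂) (Q : ℝ → ℝ) (hQc : ContinuousOn Q (Icc R₁ R₂))
    (m : ℕ) (σ τ : Fin m → ℝ) (hst : ∀ i, R₁ ≤ σ i ∧ σ i ≤ τ i ∧ τ i ≤ R₂)
    (hdis : Pairwise fun i j => Disjoint (Icc (σ i) (τ i)) (Icc (σ j) (τ j)))
    (hneg : ∀ r ∈ Icc R₁ R₂ \ ⋃ i, Icc (σ i) (τ i), Q r ≤ 0)
    (i : Fin m) (hi : ∃ r ∈ Icc (σ i) (τ i), 0 < Q r) :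
    ∃ x e q : ℝ, 0 < e ∧ 0 < q ∧ σ i ≤ x ∧ x + 10 * e ≤ τ i ∧
      ∀ r ∈ Icc x (x + 10 * e), q ≤ Q r := by
  obtain ⟨r0, hr0, hQr0⟩ := hi
  have hr0' : r0 ∈ Icc R₁ R₂ := ⟨(hst i).1.trans hr0.1, hr0.2.trans (hst i).2.2⟩
  have e1 : ∀ᶠ r in nhdsWithin r0 (Icc R₁ R₂), Q r0 / 2 < Q r :=
    (hQc r0 hr0').eventually (lt_mem_nhds (by linarith))
  have e2 : ∀ᶠ r in nhdsWithin r0 (Icc R₁ R₂), ∀ j, j ≠ i → r ∉ Icc (σ j) (τ j) := by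
    rw [eventually_all]
    intro j
    by_cases hj : j = i
    · exact Eventually.of_forall (fun r h => absurd hj h)
    · have : (Icc (σ j) (τ j))ᶜ ∈ nhds r0 := isClosed_Icc.isOpen_compl.mem_nhds
        (fun h => (hdis hj).le_bot ⟨h, hr0⟩)
      filter_upwards [mem_nhdsWithin_of_mem_nhds this] with r hr _
      exact hr
  have e3 := e1.and e2
  rw [eventually_iff, Metric.mem_nhdsWithin_iff] at e3
  obtain ⟨δ, hδ, hsub⟩ := e3
  have key : ∀ r, |r - r0| < δ → r ∈ Icc R₁ R₂ → r ∈ Icc (σ i) (τ i) ∧ Q r0 / 2 ≤ Q r := by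
    intro r h1 h2
    obtain ⟨a1, a2⟩ := hsub ⟨by rwa [Metric.mem_ball, Real.dist_eq], h2⟩
    refine ⟨?_, a1.le⟩
    by_contra hc
    have := hneg r ⟨h2, by
      rw [mem_iUnion]; rintro ⟨j, hj⟩
      by_cases hji : j = i
      · rw [hji] at hj; exact hc hj
      · exact a2 j hji hj⟩
    linarith
  set d := min (δ / 2) ((R₂ - R₁) / 2) with hd
  have hd0 : 0 < d := lt_min (by linarith) (by linarith)
  have hd1 : d ≤ δ / 2 := min_le_left _ _
  have hd2 : d ≤ (R₂ - R₁) / 2 := min_le_right _ _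
  obtain ⟨x, hx⟩ : ∃ x, ∀ r ∈ Icc x (x + d), |r - r0| < δ ∧ r ∈ Icc R₁ R₂ := by
    rcases le_total r0 ((R₁ + R₂) / 2) with hc | hc
    · refine ⟨r0, fun r hr => ⟨?_, ?_, ?_⟩⟩
      · rw [abs_lt]; constructor <;> linarith [hr.1, hr.2]
      · linarith [hr.1, hr0'.1]
      · linarith [hr.2]
    · refine ⟨r0 - d, fun r hr => ⟨?_, ?_, ?_⟩⟩
      · rw [abs_lt]; constructor <;> linarith [hr.1, hr.2]
      · linarith [hr.1]
      · linarith [hr.2, hr0'.2]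
  have hx2 : ∀ r ∈ Icc x (x + d), r ∈ Icc (σ i) (τ i) ∧ Q r0 / 2 ≤ Q r :=
    fun r hr => key r (hx r hr).1 (hx r hr).2
  refine ⟨x, d / 10, Q r0 / 2, by positivity, by positivity, ?_, ?_, ?_⟩
  · exact (hx2 x ⟨le_rfl, by linarith⟩).1.1
  · have := (hx2 (x + d) ⟨by linarith, le_rfl⟩).1.2
    linarith
  · intro r hr
    exact (hx2 r ⟨hr.1, by linarith [hr.2]⟩).2

lemma aux_all_humps (p : ℝ → ℝ) (R₁ R₂ P1 P2 : ℝ) (Q G : ℝ → ℝ) (h12 : R₁ < R₂)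
    (hQc : ContinuousOn Q (Icc R₁ R₂)) (hq1 : CondQ1 R₁ R₂ Q)
    (hP1 : 0 < P1) (hp1 : ∀ r ∈ Icc R₁ R₂, P1 ≤ p r) (hp2 : ∀ r ∈ Icc R₁ R₂, p r ≤ P2)
    (hG : ∀ s, 0 ≤ G s) (lam M : ℝ) (hlam : 0 < lam) (hM : 0 < M)
    (hGM : ∀ s, M ≤ s → lam * s ≤ G s) :
    ∃ ν0 : ℝ, 0 < ν0 ∧ ∃ K : ℝ, ∃ n0 : ℕ, 0 < n0 ∧ 
      (∀ n : ℕ, n0 ≤ n → ∃ j < n, 0 < Q (auxR R₁ R₂ n j)) ∧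
      ∀ ν : ℝ, ν0 < ν → ∀ n : ℕ, n0 ≤ n → ∀ w y,
      AuxDisc p R₁ R₂ Q G ν n w y → (∀ k < n, 0 < w k) → ∀ j < n,
      0 < Q (auxR R₁ R₂ n j) → w j ≤ K := by
  obtain ⟨m, σ, τ, hm, hst, hdis, hQ0, hQpos, hneg⟩ := hq1
  have core := fun i => aux_core R₁ R₂ h12 Q hQc m σ τ hst hdis hneg i (hQpos i)
  have H : ∀ i, ∃ ν0 : ℝ, 0 < ν0 ∧ ∃ K : ℝ, ∃ n0 : ℕ, ∀ ν : ℝ, ν0 < ν → ∀ n : ℕ, n0 ≤ n → ∀ w y,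
      AuxDisc p R₁ R₂ Q G ν n w y → (∀ k < n, 0 < w k) → ∀ j < n,
      auxR R₁ R₂ n j ∈ Icc (σ i) (τ i) → w j ≤ K := by
    intro i
    obtain ⟨x, e, q, he, hq, h1, h2, h3⟩ := core i
    exact aux_hump_i p R₁ R₂ P1 P2 Q G h12 hP1 hp1 hp2 hG lam M hlam hM hGM (σ i) (τ i) x e q
      (hst i).1 h1 h2 (hst i).2.2 he hq (hQ0 i) h3
  choose ν0 hν0 K n0 hmain using H
  obtain ⟨νm, hνm⟩ := (Set.finite_range ν0).bddAbove
  obtain ⟨Km, hKm⟩ := (Set.finite_range K).bddAbove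
  obtain ⟨nm, hnm⟩ := (Set.finite_range n0).bddAbove
  obtain ⟨x, e, q, he, hq, h1, h2, h3⟩ := core ⟨0, hm⟩
  obtain ⟨n1, hn1, hmesh⟩ := aux_mesh (R₂ - R₁) e he
  refine ⟨νm, lt_of_lt_of_le (hν0 ⟨0, hm⟩) (hνm ⟨_, rfl⟩), Km, max nm n1, by omega, ?_, ?_⟩
  · intro n hn
    have hn1' : n1 ≤ n := by omega
    have hnp : 0 < n := by omega
    have hh := hmesh n hn1'
    obtain ⟨k, k1, k2⟩ := auxR_pick R₁ R₂ h12 n hnp x ((hst _).1.trans h1)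
    refine ⟨k, ?_, lt_of_lt_of_le hq (h3 _ ⟨k1, by linarith⟩)⟩
    rw [← auxR_lt_iff R₁ R₂ h12 n k n hnp, auxR_top _ _ _ hnp]
    have := (hst ⟨0, hm⟩).2.2
    linarith
  · intro ν hν n hn w y hd hw j hj hQj
    have hnp : 0 < n := by omega
    obtain ⟨i, hi⟩ : ∃ i, auxR R₁ R₂ n j ∈ Icc (σ i) (τ i) := by
      by_contra hc
      have := hneg (auxR R₁ R₂ n j) ⟨auxR_mem R₁ R₂ h12 n j hnp hj.le, by
        rw [mem_iUnion]; exact hc⟩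
      linarith
    have a1 : ν0 i ≤ νm := hνm ⟨i, rfl⟩
    have a2 : K i ≤ Km := hKm ⟨i, rfl⟩
    have a3 : n0 i ≤ nm := hnm ⟨i, rfl⟩
    exact (hmain i ν (by linarith) n (by omega) w y hd hw j hj hi).trans a2

lemma aux_riemann (R₁ R₂ : ℝ) (h12 : R₁ < R₂) (f : ℝ → ℝ) (hf : ContinuousOn f (Icc R₁ R₂))
    (hneg : ∫ r in R₁..R₂, f r < 0) :
    ∃ κ : ℝ, 0 < κ ∧ ∃ n0 : ℕ, ∀ n : ℕ, n0 ≤ n →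
      ∑ k ∈ Finset.range n, (R₂ - R₁) / n * f (auxR R₁ R₂ n k) ≤ -κ := by
  set I := ∫ r in R₁..R₂, f r with hI
  have hL : 0 < R₂ - R₁ := by linarith
  set ε := -I / (2 * (R₂ - R₁)) with hε
  have hε0 : 0 < ε := div_pos (by linarith) (by linarith)
  have huc := isCompact_Icc.uniformContinuousOn_of_continuous hf
  rw [Metric.uniformContinuousOn_iff] at huc
  obtain ⟨δ, hδ, hu⟩ := huc ε hε0
  obtain ⟨n0, hn0, hmesh⟩ := aux_mesh (R₂ - R₁) (δ / 2) (by linarith)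
  refine ⟨-I / 2, by linarith, n0, fun n hn => ?_⟩
  have hnp : 0 < n := by omega
  have hn' : (0:ℝ) < n := by exact_mod_cast hnp
  have hm := hmesh n hn
  set h := (R₂ - R₁) / n with hh
  have hpos : 0 < h := div_pos hL hn'
  have hnh : (n:ℝ) * h = R₂ - R₁ := by rw [hh]; field_simp
  have step : ∀ k, auxR R₁ R₂ n (k+1) = auxR R₁ R₂ n k + h := by
    intro k; unfold auxR; rw [← hh]; push_cast; ring
  have sub : ∀ k < n, uIcc (auxR R₁ R₂ n k) (auxR R₁ R₂ n (k+1)) ⊆ Icc R₁ R₂ := by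
    intro k hk
    rw [uIcc_of_le (by rw [step]; linarith)]
    exact Icc_subset_Icc (auxR_mem R₁ R₂ h12 n k hnp hk.le).1 (auxR_mem R₁ R₂ h12 n (k+1) hnp hk).2
  have hint : ∀ k < n, IntervalIntegrable f volume (auxR R₁ R₂ n k) (auxR R₁ R₂ n (k+1)) :=
    fun k hk => (hf.mono (sub k hk)).intervalIntegrable
  have hsum := intervalIntegral.sum_integral_adjacent_intervals hint
  rw [auxR_top _ _ _ hnp, show auxR R₁ R₂ n 0 = R₁ by simp [auxR], ← hI] at hsum
  have cell : ∀ k ∈ Finset.range n, h * f (auxR R₁ R₂ n k) ≤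
      (∫ r in auxR R₁ R₂ n k..auxR R₁ R₂ n (k+1), f r) + h * ε := by
    intro k hk
    have hk' : k < n := by simpa using hk
    have hle : auxR R₁ R₂ n k ≤ auxR R₁ R₂ n (k+1) := by rw [step]; linarith
    have hmono : ∫ r in auxR R₁ R₂ n k..auxR R₁ R₂ n (k+1), (f (auxR R₁ R₂ n k) - ε) ≤
        ∫ r in auxR R₁ R₂ n k..auxR R₁ R₂ n (k+1), f r := by
      apply intervalIntegral.integral_mono_on hle (by simp) (hint k hk')
      intro r hr
      have := hu r (sub k hk' (by rw [uIcc_of_le hle]; exact hr)) (auxR R₁ R₂ n k)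
        (auxR_mem R₁ R₂ h12 n k hnp hk'.le) (by
          rw [Real.dist_eq, abs_lt]
          have := hr.1
          have := hr.2
          rw [step] at this
          constructor <;> linarith)
      rw [Real.dist_eq, abs_lt] at this
      linarith [this.1]
    rw [intervalIntegral.integral_const, step, smul_eq_mul] at hmono
    rw [step]
    linarith
  have := Finset.sum_le_sum cell
  rw [Finset.sum_add_distrib, hsum, Finset.sum_const, Finset.card_range, nsmul_eq_mul,
    ← mul_assoc, hnh] at this
  have e2 : (R₂ - R₁) * ε = -I / 2 := by rw [hε]; field_simp
  linarith

lemma aux_small (p : ℝ → ℝ) (R₁ R₂ P1 A κ ν : ℝ) (Q G : ℝ → ℝ) (h12 : R₁ < R₂)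
    (hP1 : 0 < P1) (hp1 : ∀ r ∈ Icc R₁ R₂, P1 ≤ p r) (hA : 0 < A) (hκ : 0 < κ) (hν : 0 < ν)
    (hfA : ∀ r ∈ Icc R₁ R₂, |p r * Q r| ≤ A)
    (n0 : ℕ) (hsum : ∀ n : ℕ, n0 ≤ n →
      ∑ k ∈ Finset.range n, (R₂ - R₁) / n * (p (auxR R₁ R₂ n k) * Q (auxR R₁ R₂ n k)) ≤ -κ)
    (hG : ∀ s, 0 ≤ G s) (hGp : ∀ s, 0 < s → 0 < G s)
    (hreg : ∀ ε : ℝ, 0 < ε → ∃ δ > (0:ℝ), ∃ η > (0:ℝ), ∀ s t : ℝ, 0 < s → s < δ →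
      |t - s| ≤ η * s → |G t - G s| ≤ ε * G s)
    (hG0 : ∀ ε : ℝ, 0 < ε → ∃ δ > (0:ℝ), ∀ s, 0 < s → s < δ → G s ≤ ε * s) :
    ∃ α0 : ℝ, 0 < α0 ∧ ∀ n : ℕ, n0 ≤ n → 0 < n → ∀ w y, AuxDisc p R₁ R₂ Q G ν n w y →
      w 0 = α0 → (∀ k < n, 0 < w k) ∧ 0 < y n := by
  have hL : 0 < R₂ - R₁ := by linarith
  set L := R₂ - R₁ with hLdef
  obtain ⟨δ, hδ, η', hη', hreg1⟩ := hreg (κ / (2 * A * L)) (by positivity)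
  set η := min η' (1/2) with hη
  have hη0 : 0 < η := lt_min hη' (by norm_num)
  have hη1 : η ≤ η' := min_le_left _ _
  have hη2 : η ≤ 1/2 := min_le_right _ _
  set ε2 := η * P1 / (2 * ν * A * L * L) with hε2
  have hε20 : 0 < ε2 := by positivity
  obtain ⟨δ2, hδ2, hG1⟩ := hG0 ε2 hε20
  set α := min (δ / 2) (δ2 / 2) with hα
  have hα0 : 0 < α := lt_min (by linarith) (by linarith)
  have hα1 : α ≤ δ / 2 := min_le_left _ _
  have hα2 : α ≤ δ2 / 2 := min_le_right _ _
  refine ⟨α, hα0, fun n hn hnp w y ⟨ry, rw', y0⟩ w0 => ?_⟩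
  have hn' : (0:ℝ) < n := by exact_mod_cast hnp
  have hsn := hsum n hn
  set h := L / n with hh
  have hpos : 0 < h := div_pos hL hn'
  have hnh : (n:ℝ) * h = L := by rw [hh]; field_simp
  have hkh : ∀ k : ℕ, k ≤ n → (k:ℝ) * h ≤ L := by
    intro k hk
    have : (k:ℝ) ≤ n := by exact_mod_cast hk
    rw [← hnh]; exact mul_le_mul_of_nonneg_right this hpos.le
  set B := ν * A * (ε2 * (2 * α)) with hB
  have hB0 : 0 < B := by positivity
  have hLB : L * (L * B / P1) = η * α := by
    rw [hB, hε2]; field_simp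
  have bnd : ∀ k : ℕ, k ≤ n → |y k| ≤ k * h * B ∧ |w k - α| ≤ k * h * (L * B / P1) := by
    intro k
    induction k with
    | zero => intro _; simp [y0, w0]
    | succ k ih =>
      intro hk
      obtain ⟨i1, i2⟩ := ih (by omega)
      have m1 := auxR_mem R₁ R₂ h12 n k hnp (by omega)
      have c1 := hfA _ m1
      have c2 := hp1 _ m1
      have i3 : |w k - α| ≤ η * α := by
        rw [← hLB]
        exact i2.trans (mul_le_mul_of_nonneg_right (hkh k (by omega)) (by positivity))
      have i4 := abs_le.1 i3
      have i5 : η * α ≤ 1/2 * α := mul_le_mul_of_nonneg_right hη2 hα0.le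
      have g1 := hG1 (w k) (by linarith [i4.1]) (by linarith [i4.2])
      have g2 : G (w k) ≤ ε2 * (2 * α) :=
        g1.trans (mul_le_mul_of_nonneg_left (by linarith [i4.2]) hε20.le)
      have y1 : |y (k+1)| ≤ (k+1:ℕ) * h * B := by
        rw [ry k]
        have t1 : |ν * h * (p (auxR R₁ R₂ n k) * Q (auxR R₁ R₂ n k)) * G (w k)| ≤ h * B := by
          rw [abs_mul, abs_mul, abs_of_nonneg (hG _), abs_of_pos (by positivity : 0 < ν * h)]
          calc _ ≤ ν * h * A * (ε2 * (2 * α)) := by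
                apply mul_le_mul _ g2 (hG _) (by positivity)
                exact mul_le_mul_of_nonneg_left c1 (by positivity)
            _ = h * B := by rw [hB]; ring
        have t2 := abs_sub (y k) (ν * h * (p (auxR R₁ R₂ n k) * Q (auxR R₁ R₂ n k)) * G (w k))
        push_cast
        linarith
      refine ⟨y1, ?_⟩
      rw [rw' k]
      have t1 : |h / p (auxR R₁ R₂ n k) * y (k+1)| ≤ h * (L * B / P1) := by
        rw [abs_mul, abs_of_pos (div_pos hpos (by linarith))]
        calc _ ≤ h / P1 * (L * B) := by
              apply mul_le_mul _ _ (abs_nonneg _) (by positivity)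
              · exact div_le_div_of_nonneg_left hpos.le hP1 c2
              · exact y1.trans (mul_le_mul_of_nonneg_right (hkh _ hk) hB0.le)
          _ = _ := by ring
      have t2 := abs_add_le (w k - α) (h / p (auxR R₁ R₂ n k) * y (k+1))
      rw [show w k + h / p (auxR R₁ R₂ n k) * y (k+1) - α =
        w k - α + h / p (auxR R₁ R₂ n k) * y (k+1) by ring]
      push_cast
      linarith
  have near : ∀ k : ℕ, k ≤ n → |w k - α| ≤ η * α := by
    intro k hk
    rw [← hLB]
    exact (bnd k hk).2.trans (mul_le_mul_of_nonneg_right (hkh k hk) (by positivity))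
  have i5 : η * α ≤ 1/2 * α := mul_le_mul_of_nonneg_right hη2 hα0.le
  refine ⟨fun k hk => by have := abs_le.1 (near k hk.le); linarith [this.1], ?_⟩
  set ε := κ / (2 * A * L) with hε
  have hGα := hGp α hα0
  have low : ∀ k : ℕ, k ≤ n → ν * G α * (-(∑ l ∈ Finset.range k,
      h * (p (auxR R₁ R₂ n l) * Q (auxR R₁ R₂ n l))) - k * h * (A * ε)) ≤ y k := by
    intro k
    induction k with
    | zero => intro _; simp [y0]
    | succ k ih =>
      intro hk
      have i1 := ih (by omega)
      have m1 := auxR_mem R₁ R₂ h12 n k hnp (by omega)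
      have c1 := hfA _ m1
      have r1 := hreg1 α (w k) hα0 (by linarith)
        ((near k (by omega)).trans (mul_le_mul_of_nonneg_right hη1 hα0.le))
      rw [ry k, Finset.sum_range_succ]
      set F := p (auxR R₁ R₂ n k) * Q (auxR R₁ R₂ n k) with hF
      have t1 : F * (G (w k) - G α) ≤ A * (ε * G α) := by
        refine (le_abs_self _).trans ?_
        rw [abs_mul]
        exact mul_le_mul c1 r1 (abs_nonneg _) hA.le
      have t2 : ν * h * (F * (G (w k) - G α)) ≤ ν * h * (A * (ε * G α)) :=
        mul_le_mul_of_nonneg_left t1 (by positivity)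
      push_cast
      linarith
  have l1 := low n le_rfl
  rw [hnh] at l1
  have l2 : L * (A * ε) = κ / 2 := by rw [hε]; field_simp
  rw [l2] at l1
  refine lt_of_lt_of_le ?_ l1
  have : 0 < -(∑ l ∈ Finset.range n, h * (p (auxR R₁ R₂ n l) * Q (auxR R₁ R₂ n l))) - κ / 2 := by
    linarith
  positivity

/-- upper bound for discrete Neumann solutions -/
lemma aux_upper (p : ℝ → ℝ) (R₁ R₂ P1 ν : ℝ) (Q G : ℝ → ℝ) (h12 : R₁ < R₂)
    (hP1 : 0 < P1) (hp1 : ∀ r ∈ Icc R₁ R₂, P1 ≤ p r) (hν : 0 < ν) (hG : ∀ s, 0 ≤ G s)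
    (n : ℕ) (hn : 0 < n) (w y : ℕ → ℝ) (hd : AuxDisc p R₁ R₂ Q G ν n w y) (hyn : y n = 0)
    (K : ℝ) (hK : ∀ j < n, 0 < Q (auxR R₁ R₂ n j) → w j ≤ K)
    (hex : ∃ j < n, 0 < Q (auxR R₁ R₂ n j)) : ∀ k < n, w k ≤ K := by
  obtain ⟨ry, rw', y0⟩ := hd
  have hn' : (0:ℝ) < n := by exact_mod_cast hn
  have hpos : 0 < (R₂ - R₁) / n := div_pos (by linarith) hn'
  set h := (R₂ - R₁) / n with hh
  have hpp : ∀ k ≤ n, 0 < p (auxR R₁ R₂ n k) := fun k hk =>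
    lt_of_lt_of_le hP1 (hp1 _ (auxR_mem R₁ R₂ h12 n k hn hk))
  have hbp : ∀ k ≤ n, 0 < h / p (auxR R₁ R₂ n k) := fun k hk => div_pos hpos (hpp k hk)
  by_contra hcon
  push Not at hcon
  obtain ⟨k0, hk0, hk0K⟩ := hcon
  obtain ⟨jm, hjm, hjmax⟩ := Finset.exists_max_image (Finset.range n) w ⟨k0, by simpa using hk0⟩
  have hex2 : ∃ j, j < n ∧ w j = w jm := ⟨jm, by simpa using hjm, rfl⟩
  classical
  set j := Nat.find hex2 with hj
  obtain ⟨hjn, hjw⟩ := Nat.find_spec hex2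
  have hmax : ∀ k < n, w k ≤ w jm := fun k hk => hjmax k (by simpa using hk)
  have hbigK : K < w jm := lt_of_lt_of_le hk0K (hmax k0 hk0)
  have hQneg : ∀ k < n, w k = w jm → y k ≤ y (k+1) := by
    intro k hk hw
    have : Q (auxR R₁ R₂ n k) ≤ 0 := by
      by_contra hc
      push Not at hc
      have := hK k hk hc
      linarith
    rw [ry k]
    have : ν * h * (p (auxR R₁ R₂ n k) * Q (auxR R₁ R₂ n k)) * G (w k) ≤ 0 := by
      have a1 := hpp k hk.le
      have a2 := hG (w k)
      have : p (auxR R₁ R₂ n k) * Q (auxR R₁ R₂ n k) ≤ 0 := mul_nonpos_of_nonneg_of_nonpos a1.le this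
      apply mul_nonpos_of_nonpos_of_nonneg _ a2
      exact mul_nonpos_of_nonneg_of_nonpos (by positivity) this
    linarith
  have prop : ∀ k, j ≤ k → 0 ≤ y j → k < n → w k = w jm ∧ y j ≤ y k := by
    intro k hjk
    induction k, hjk using Nat.le_induction with
    | base => intro _ _; exact ⟨hjw, le_rfl⟩
    | succ k hk ih =>
      intro hy hkn
      obtain ⟨i1, i2⟩ := ih hy (by omega)
      have i3 := hQneg k (by omega) i1
      refine ⟨le_antisymm (hmax _ hkn) ?_, by linarith⟩
      rw [rw' k, i1]
      have := mul_nonneg (hbp k (by omega)).le (by linarith : 0 ≤ y (k+1))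
      linarith
  have hyjle : 0 ≤ y j → y j ≤ 0 := by
    intro hy
    obtain ⟨i1, i2⟩ := prop (n-1) (by omega) hy (by omega)
    have := hQneg (n-1) (by omega) i1
    rw [show n - 1 + 1 = n by omega, hyn] at this
    linarith
  rcases Nat.eq_zero_or_pos j with hj0 | hj0
  · obtain ⟨l, hl, hlQ⟩ := hex
    have := (prop l (by omega) (by rw [hj0, y0]) hl).1
    have := hK l hl hlQ
    linarith
  · have hlt : w (j-1) < w jm := by
      refine lt_of_le_of_ne (hmax _ (by omega)) (fun he => ?_)
      exact Nat.find_min hex2 (m := j - 1) (by omega) ⟨by omega, he⟩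
    have e1 := rw' (j-1)
    rw [show j - 1 + 1 = j by omega, hjw] at e1
    have b1 := hbp (j-1) (by omega)
    have : 0 < y j := by
      by_contra hc
      push Not at hc
      have := mul_nonpos_of_nonneg_of_nonpos b1.le hc
      linarith
    have := hyjle this.le
    linarith

lemma aux_discrete (p : ℝ → ℝ) (R₁ R₂ P1 ν : ℝ) (Q G : ℝ → ℝ) (h12 : R₁ < R₂)
    (hP1 : 0 < P1) (hp1 : ∀ r, R₁ ≤ r → P1 ≤ p r) (hν : 0 < ν) (hG : ∀ s, 0 ≤ G s)
    (hGc : Continuous G) (hG0 : G 0 = 0)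
    (n : ℕ) (hn : 0 < n) (K α0 : ℝ) (hα0 : 0 < α0)
    (hK : ∀ w y, AuxDisc p R₁ R₂ Q G ν n w y → (∀ k < n, 0 < w k) →
      ∀ j < n, 0 < Q (auxR R₁ R₂ n j) → w j ≤ K)
    (hex : ∃ j < n, 0 < Q (auxR R₁ R₂ n j))
    (hsm : ∀ w y, AuxDisc p R₁ R₂ Q G ν n w y → w 0 = α0 → (∀ k < n, 0 < w k) ∧ 0 < y n) :
    ∃ w y, AuxDisc p R₁ R₂ Q G ν n w y ∧ α0 ≤ w 0 ∧ y n = 0 ∧ ∀ k < n, 0 < w k ∧ w k ≤ K := by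
  have hn' : (0:ℝ) < n := by exact_mod_cast hn
  have hpos : 0 < (R₂ - R₁) / n := div_pos (by linarith) hn'
  set h := (R₂ - R₁) / n with hh
  set c : ℕ → ℝ := fun k => ν * h * (p (auxR R₁ R₂ n k) * Q (auxR R₁ R₂ n k)) with hc
  set b : ℕ → ℝ := fun k => h / p (auxR R₁ R₂ n k) with hb
  have hppos : ∀ k, 0 < p (auxR R₁ R₂ n k) := fun k => lt_of_lt_of_le hP1 (hp1 _ (by
    unfold auxR
    have : (0:ℝ) ≤ k * ((R₂ - R₁) / n) := by rw [← hh]; positivity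
    linarith))
  have hbpos : ∀ k, 0 < b k := fun k => div_pos hpos (hppos k)
  have hdisc : ∀ α, AuxDisc p R₁ R₂ Q G ν n (fun k => (auxSeq c b G α k).1)
      (fun k => (auxSeq c b G α k).2) := fun α =>
    ⟨fun k => by simp [auxSeq, hc, hh], fun k => by simp [auxSeq, hb, hh], by simp [auxSeq]⟩
  obtain ⟨s1, s2⟩ := hsm _ _ (hdisc α0) (by simp [auxSeq])
  set α1 := max K α0 + 1 with hα1
  have a1 : α0 ≤ α1 := by have := le_max_right K α0; linarith
  have a2 : K < α1 := by have := le_max_left K α0; linarith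
  have hneg : ¬ ∀ k < n, 0 < (auxSeq c b G α1 k).1 := by
    intro hall
    have hd := hdisc α1
    have hK1 := hK _ _ hd hall
    classical
    set j := Nat.find hex with hj
    obtain ⟨hjn, hjQ⟩ := Nat.find_spec hex
    obtain ⟨ry, rw', y0⟩ := hd
    have ind : ∀ k, k ≤ j → 0 ≤ (auxSeq c b G α1 k).2 ∧ α1 ≤ (auxSeq c b G α1 k).1 := by
      intro k
      induction k with
      | zero => intro _; simp [auxSeq]
      | succ k ih =>
        intro hk
        obtain ⟨i1, i2⟩ := ih (by omega)
        have hQk : Q (auxR R₁ R₂ n k) ≤ 0 := by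
          by_contra hcc
          push Not at hcc
          exact Nat.find_min hex (m := k) (by omega) ⟨by omega, hcc⟩
        have ck : c k ≤ 0 := by
          have : p (auxR R₁ R₂ n k) * Q (auxR R₁ R₂ n k) ≤ 0 :=
            mul_nonpos_of_nonneg_of_nonpos (hppos k).le hQk
          exact mul_nonpos_of_nonneg_of_nonpos (by positivity) this
        have := mul_nonpos_of_nonpos_of_nonneg ck (hG (auxSeq c b G α1 k).1)
        have e1 : 0 ≤ (auxSeq c b G α1 k).2 - c k * G (auxSeq c b G α1 k).1 := by linarith
        have e2 := mul_nonneg (hbpos k).le e1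
        simp only [auxSeq]
        exact ⟨e1, by linarith⟩
    have := hK1 j hjn hjQ
    have := (ind j le_rfl).2
    linarith
  obtain ⟨α, hα, p1, p2⟩ := aux_shoot c b G hGc hG0 hbpos n hn α0 α1 hα0 a1 s1 s2 hneg
  refine ⟨_, _, hdisc α, by simpa [auxSeq] using hα.1, p2, fun k hk => ⟨p1 k hk, ?_⟩⟩
  exact aux_upper p R₁ R₂ P1 ν Q G h12 hP1 (fun r hr => hp1 r hr.1) hν hG n hn _ _ (hdisc α) p2 K
    (hK _ _ (hdisc α) p1) hex k hk

lemma aux_tele_abs (u : ℕ → ℝ) (z ε : ℝ) (i j : ℕ) (hij : i ≤ j)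
    (H : ∀ k, i ≤ k → k < j → |u (k+1) - u k - z| ≤ ε) :
    |u j - u i - ((j:ℝ) - i) * z| ≤ ((j:ℝ) - i) * ε := by
  have h1 := aux_tele_ge u (z - ε) i j hij (fun k h1 h2 => by
    have := abs_le.1 (H k h1 h2); linarith [this.1])
  have h2 := aux_tele_le u (z + ε) i j hij (fun k h1 h2 => by
    have := abs_le.1 (H k h1 h2); linarith [this.2])
  rw [abs_le]; constructor <;> linarith

noncomputable def auxI (R₁ R₂ : ℝ) (n : ℕ) (t : ℝ) : ℕ := ⌊(t - R₁) / ((R₂ - R₁) / n)⌋₊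

lemma auxI_spec (R₁ R₂ : ℝ) (h12 : R₁ < R₂) (n : ℕ) (hn : 0 < n) (t : ℝ) (ht : t ∈ Icc R₁ R₂) :
    auxR R₁ R₂ n (auxI R₁ R₂ n t) ≤ t ∧ t ≤ auxR R₁ R₂ n (auxI R₁ R₂ n t) + (R₂ - R₁) / n ∧
      auxI R₁ R₂ n t ≤ n := by
  have hn' : (0:ℝ) < n := by exact_mod_cast hn
  have hL : 0 < (R₂ - R₁) / n := div_pos (by linarith) hn'
  have h0 : 0 ≤ (t - R₁) / ((R₂ - R₁) / n) := div_nonneg (by linarith [ht.1]) hL.le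
  have a1 : auxR R₁ R₂ n (auxI R₁ R₂ n t) ≤ t := by
    have := Nat.floor_le h0
    rw [le_div_iff₀ hL] at this
    unfold auxR auxI; linarith
  refine ⟨a1, ?_, ?_⟩
  · have := (Nat.lt_floor_add_one ((t - R₁) / ((R₂ - R₁) / n))).le
    rw [div_le_iff₀ hL] at this
    unfold auxR auxI; linarith
  · rw [← auxR_le_iff R₁ R₂ h12 n _ _ hn, auxR_top _ _ _ hn]
    linarith [ht.2]

lemma aux_lim (R₁ R₂ : ℝ) (h12 : R₁ < R₂) (F : ℝ → ℝ → ℝ)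
    (hF : ContinuousOn (fun z : ℝ × ℝ => F z.1 z.2) (Icc R₁ R₂ ×ˢ univ))
    (u v z : ℕ → ℕ → ℝ) (C : ℝ) (hC : 0 ≤ C) (n0 : ℕ) (hn0 : 0 < n0)
    (hu : ∀ n, n0 ≤ n → ∀ k < n, u n (k+1) = u n k + (R₂ - R₁) / n * F (auxR R₁ R₂ n k) (z n k))
    (hz : ∀ n, n0 ≤ n → ∀ k < n, |z n k - v n k| ≤ C * ((R₂ - R₁) / n))
    (hv : ∀ n, n0 ≤ n → ∀ k < n, |v n (k+1) - v n k| ≤ C * ((R₂ - R₁) / n))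
    (l : Filter ℕ) [l.NeBot] (hl : l ≤ atTop) (U V : ℝ → ℝ)
    (hU : ∀ t ∈ Icc R₁ R₂, Tendsto (fun n => u n (auxI R₁ R₂ n t)) l (nhds (U t)))
    (hV : ∀ t ∈ Icc R₁ R₂, Tendsto (fun n => v n (auxI R₁ R₂ n t)) l (nhds (V t)))
    (s : ℝ) (hs : s ∈ Icc R₁ R₂) :
    HasDerivWithinAt U (F s (V s)) (Icc R₁ R₂) s := by
  have hmeshT : Tendsto (fun n : ℕ => (R₂ - R₁) / (n:ℝ)) l (nhds 0) :=
    (tendsto_const_div_atTop_nhds_zero_nat (R₂ - R₁)).mono_left hl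
  rw [hasDerivWithinAt_iff_isLittleO, Asymptotics.isLittleO_iff]
  intro ε hε
  set F0 := F s (V s) with hF0
  have hc := hF (s, V s) ⟨hs, mem_univ _⟩
  rw [Metric.continuousWithinAt_iff] at hc
  obtain ⟨δ1, hδ1, hcl⟩ := hc ε hε
  have hcl2 : ∀ r x, r ∈ Icc R₁ R₂ → |r - s| < δ1 → |x - V s| < δ1 → |F r x - F0| ≤ ε := by
    intro r x hr h1 h2
    have := hcl (x := (r, x)) ⟨hr, mem_univ _⟩ (by
      rw [Prod.dist_eq, max_lt_iff]; exact ⟨by rwa [Real.dist_eq], by rwa [Real.dist_eq]⟩)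
    rw [Real.dist_eq] at this
    exact this.le
  set δ := δ1 / (4 * (C + 1)) with hδ
  have hδ0 : 0 < δ := by positivity
  have hδC : C * δ + δ = δ1 / 4 := by rw [hδ]; field_simp
  have hCδ : 0 ≤ C * δ := by positivity
  rw [eventually_nhdsWithin_iff]
  filter_upwards [Metric.ball_mem_nhds s hδ0] with t ht htI
  rw [Metric.mem_ball, Real.dist_eq] at ht
  rw [Real.norm_eq_abs, Real.norm_eq_abs, smul_eq_mul]
  have hlim1 : Tendsto (fun n => |u n (auxI R₁ R₂ n t) - u n (auxI R₁ R₂ n s) - (t - s) * F0|) l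
      (nhds |U t - U s - (t - s) * F0|) :=
    (((hU t htI).sub (hU s hs)).sub_const _).abs
  have hlim2 : Tendsto (fun n : ℕ => (|t - s| + (R₂ - R₁) / n) * ε + (R₂ - R₁) / n * |F0|) l
      (nhds ((|t - s| + 0) * ε + 0 * |F0|)) :=
    ((hmeshT.const_add _).mul_const _).add (hmeshT.mul_const _)
  have hle : |U t - U s - (t - s) * F0| ≤ (|t - s| + 0) * ε + 0 * |F0| := by
    refine le_of_tendsto_of_tendsto hlim1 hlim2 ?_
    have ev1 : ∀ᶠ n in l, n0 ≤ n := hl (eventually_ge_atTop n0)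
    have ev2 : ∀ᶠ n : ℕ in l, (R₂ - R₁) / (n:ℝ) < δ := hmeshT.eventually (gt_mem_nhds hδ0)
    have ev3 : ∀ᶠ n in l, |v n (auxI R₁ R₂ n s) - V s| < δ1 / 4 := by
      have := (hV s hs).eventually (Metric.ball_mem_nhds (V s) (by positivity : 0 < δ1 / 4))
      filter_upwards [this] with n hn
      rwa [Real.dist_eq] at hn
    filter_upwards [ev1, ev2, ev3] with n e1 e2 e3
    have hnp : 0 < n := by omega
    have hn' : (0:ℝ) < n := by exact_mod_cast hnp
    obtain ⟨t1, t2, t3⟩ := auxI_spec R₁ R₂ h12 n hnp t htI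
    obtain ⟨s1, s2, s3⟩ := auxI_spec R₁ R₂ h12 n hnp s hs
    set a := auxI R₁ R₂ n s with ha
    set b := auxI R₁ R₂ n t with hb
    set h := (R₂ - R₁) / n with hh
    have hpos : 0 < h := div_pos (by linarith) hn'
    have diff : ∀ k m : ℕ, auxR R₁ R₂ n m - auxR R₁ R₂ n k = ((m:ℝ) - k) * h := by
      intro k l; unfold auxR; rw [← hh]; ring
    have mono : ∀ k m : ℕ, k ≤ m → auxR R₁ R₂ n k ≤ auxR R₁ R₂ n m :=
      fun k m hkm => (auxR_le_iff R₁ R₂ h12 n k m hnp).2 hkm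
    obtain ⟨q1, q2⟩ := abs_lt.1 ht
    have Q1 := le_abs_self (t - s)
    have Q2 := neg_abs_le (t - s)
    -- v Lipschitz
    have vlip : ∀ i j : ℕ, i ≤ j → j ≤ n → |v n j - v n i| ≤ C * (((j:ℝ) - i) * h) := by
      intro i j hij hj
      have := aux_tele_abs (v n) 0 (C * h) i j hij (fun k h1 h2 => by
        rw [sub_zero]; exact hv n e1 k (by omega))
      rw [mul_zero, sub_zero] at this
      linarith
    have step : ∀ k, min a b ≤ k → k < max a b → |u n (k+1) - u n k - h * F0| ≤ h * ε := by
      intro k hk1 hk2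
      have hkn : k < n := by omega
      have r1 : auxR R₁ R₂ n k ≤ max s t := by
        rcases lt_max_iff.1 hk2 with hx | hx
        · exact ((mono _ _ hx.le).trans s1).trans (le_max_left _ _)
        · exact ((mono _ _ hx.le).trans t1).trans (le_max_right _ _)
      have r2 : min s t - h ≤ auxR R₁ R₂ n k := by
        rcases min_le_iff.1 hk1 with hx | hx
        · have := mono _ _ hx; have := min_le_left s t; linarith
        · have := mono _ _ hx; have := min_le_right s t; linarith
      have r3 : |auxR R₁ R₂ n k - s| < 2 * δ := by
        rw [abs_lt]
        constructor
        · rcases min_choice s t with hx | hx <;> rw [hx] at r2 <;> linarith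
        · rcases max_choice s t with hx | hx <;> rw [hx] at r1 <;> linarith
      have r4 : |v n k - v n a| ≤ C * (2 * δ) := by
        rcases le_total a k with hx | hx
        · refine (vlip a k hx hkn.le).trans (mul_le_mul_of_nonneg_left ?_ hC)
          rw [← diff]
          have hab : k < b := by omega
          have := (mono _ _ hab.le)
          linarith
        · rw [abs_sub_comm]
          refine (vlip k a hx s3).trans (mul_le_mul_of_nonneg_left ?_ hC)
          rw [← diff]
          rcases min_le_iff.1 hk1 with hy | hy
          · have := mono _ _ hy; linarith
          · have := mono _ _ hy; linarith
      have r5 := hz n e1 k hkn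
      have r6 : C * h ≤ C * δ := mul_le_mul_of_nonneg_left e2.le hC
      have r7 : |z n k - V s| < δ1 := by
        have := abs_sub_le (z n k) (v n k) (V s)
        have := abs_sub_le (v n k) (v n a) (V s)
        linarith
      have := hcl2 (auxR R₁ R₂ n k) (z n k) (auxR_mem R₁ R₂ h12 n k hnp hkn.le)
        (by linarith) r7
      rw [hu n e1 k hkn, show u n k + h * F (auxR R₁ R₂ n k) (z n k) - u n k - h * F0 =
        h * (F (auxR R₁ R₂ n k) (z n k) - F0) by ring, abs_mul, abs_of_pos hpos]
      exact mul_le_mul_of_nonneg_left this hpos.le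
    have key : |u n b - u n a - ((b:ℝ) - a) * (h * F0)| ≤ (|t - s| + h) * ε := by
      rcases le_total a b with hab | hab
      · have := aux_tele_abs (u n) (h * F0) (h * ε) a b hab (fun k h1 h2 =>
          step k (by omega) (by omega))
        refine this.trans ?_
        rw [← mul_assoc, ← diff]
        exact mul_le_mul_of_nonneg_right (by linarith) hε.le
      · have := aux_tele_abs (u n) (h * F0) (h * ε) b a hab (fun k h1 h2 =>
          step k (by omega) (by omega))
        rw [← abs_neg, show -(u n b - u n a - ((b:ℝ) - a) * (h * F0)) =
          u n a - u n b - ((a:ℝ) - b) * (h * F0) by ring]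
        refine this.trans ?_
        rw [← mul_assoc, ← diff]
        exact mul_le_mul_of_nonneg_right (by linarith) hε.le
    have key2 : |((b:ℝ) - a) * (h * F0) - (t - s) * F0| ≤ h * |F0| := by
      rw [← mul_assoc, ← diff, ← sub_mul, abs_mul]
      refine mul_le_mul_of_nonneg_right ?_ (abs_nonneg _)
      rw [abs_le]; constructor <;> linarith
    have := abs_sub_le (u n b - u n a) (((b:ℝ) - a) * (h * F0)) ((t - s) * F0)
    linarith
  linarith

lemma aux_ode (p : ℝ → ℝ) (R₁ R₂ P1 ν A Gm K α0 : ℝ) (Q G : ℝ → ℝ) (h12 : R₁ < R₂)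
    (hP1 : 0 < P1) (hp1 : ∀ r ∈ Icc R₁ R₂, P1 ≤ p r) (hν : 0 < ν)
    (hpc : ContinuousOn p (Icc R₁ R₂)) (hQc : ContinuousOn Q (Icc R₁ R₂)) (hGc : Continuous G)
    (hA : 0 < A) (hfA : ∀ r ∈ Icc R₁ R₂, |p r * Q r| ≤ A) (hGm0 : 0 < Gm)
    (hGm : ∀ s ∈ Icc 0 K, |G s| ≤ Gm)
    (n0 : ℕ) (hn0 : 0 < n0)
    (H : ∀ n, n0 ≤ n → ∃ w y, AuxDisc p R₁ R₂ Q G ν n w y ∧ α0 ≤ w 0 ∧ y n = 0 ∧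
      ∀ k < n, 0 < w k ∧ w k ≤ K) :
    ∃ W Y : ℝ → ℝ, 
      (∀ r ∈ Icc R₁ R₂, HasDerivWithinAt W (Y r / p r) (Icc R₁ R₂) r) ∧
      (∀ r ∈ Icc R₁ R₂, HasDerivWithinAt Y (-(ν * (p r * Q r) * G (W r))) (Icc R₁ R₂) r) ∧
      (∀ r ∈ Icc R₁ R₂, 0 ≤ W r ∧ W r ≤ K) ∧ α0 ≤ W R₁ ∧ Y R₁ = 0 ∧ Y R₂ = 0 := by
  have H' : ∀ n, ∃ w y : ℕ → ℝ, n0 ≤ n → AuxDisc p R₁ R₂ Q G ν n w y ∧ α0 ≤ w 0 ∧ y n = 0 ∧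
      ∀ k < n, 0 < w k ∧ w k ≤ K := by
    intro n
    by_cases hn : n0 ≤ n
    · obtain ⟨w, y, h⟩ := H n hn
      exact ⟨w, y, fun _ => h⟩
    · exact ⟨0, 0, fun h => absurd h hn⟩
  choose w y hwy using H'
  have hL : 0 < R₂ - R₁ := by linarith
  have hpos : ∀ n, n0 ≤ n → 0 < (R₂ - R₁) / (n:ℝ) := fun n hn =>
    div_pos hL (by exact_mod_cast (by omega : 0 < n))
  have wb : ∀ n, n0 ≤ n → ∀ k ≤ n, w n k ∈ Icc 0 K := by
    intro n hn k hk
    obtain ⟨⟨ry, rw', y0⟩, _, hyn, hw⟩ := hwy n hn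
    rcases Nat.lt_or_ge k n with hkn | hkn
    · exact ⟨(hw k hkn).1.le, (hw k hkn).2⟩
    · have e1 := rw' (n-1)
      have hkn' : k = n := by omega
      rw [show n - 1 + 1 = n by omega, hyn, mul_zero, add_zero] at e1
      rw [hkn', e1]
      have := hw (n-1) (by omega)
      exact ⟨this.1.le, this.2⟩
  set C1 := ν * A * Gm with hC1
  have hC10 : 0 < C1 := by positivity
  have ystep : ∀ n, n0 ≤ n → ∀ k < n, |y n (k+1) - y n k| ≤ C1 * ((R₂ - R₁) / n) := by
    intro n hn k hk
    obtain ⟨⟨ry, rw', y0⟩, _, hyn, hw⟩ := hwy n hn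
    have hp := hpos n hn
    have a1 := hfA _ (auxR_mem R₁ R₂ h12 n k (by omega) hk.le)
    have a2 := hGm _ (wb n hn k hk.le)
    rw [ry k, sub_sub_cancel_left, abs_neg, abs_mul, abs_mul,
      abs_of_pos (by positivity : 0 < ν * ((R₂ - R₁) / n))]
    calc _ ≤ ν * ((R₂ - R₁) / n) * A * Gm := by
          apply mul_le_mul _ a2 (abs_nonneg _) (by positivity)
          exact mul_le_mul_of_nonneg_left a1 (by positivity)
      _ = _ := by rw [hC1]; ring
  set Yb := C1 * (R₂ - R₁) with hYb
  have hYb0 : 0 < Yb := by positivity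
  have yb : ∀ n, n0 ≤ n → ∀ k ≤ n, |y n k| ≤ Yb := by
    intro n hn k hk
    have y0 := (hwy n hn).1.2.2
    have := aux_tele_abs (y n) 0 _ 0 k (by omega) (fun m _ hm => by
      rw [sub_zero]; exact ystep n hn m (by omega))
    rw [y0, mul_zero, sub_zero, sub_zero, Nat.cast_zero, sub_zero] at this
    refine this.trans ?_
    have hn' : (0:ℝ) < n := by exact_mod_cast (by omega : 0 < n)
    have hk' : (k:ℝ) ≤ n := by exact_mod_cast hk
    calc (k:ℝ) * (C1 * ((R₂ - R₁) / n)) ≤ n * (C1 * ((R₂ - R₁) / n)) := by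
          have := hpos n hn
          exact mul_le_mul_of_nonneg_right hk' (by positivity)
      _ = Yb := by rw [hYb]; field_simp
  set C2 := Yb / P1 with hC2
  have hC20 : 0 < C2 := by positivity
  have wstep : ∀ n, n0 ≤ n → ∀ k < n, |w n (k+1) - w n k| ≤ C2 * ((R₂ - R₁) / n) := by
    intro n hn k hk
    obtain ⟨⟨ry, rw', y0⟩, _, hyn, hw⟩ := hwy n hn
    have hp := hpos n hn
    have a1 := hp1 _ (auxR_mem R₁ R₂ h12 n k (by omega) hk.le)
    have a2 := yb n hn (k+1) hk
    rw [rw' k, add_sub_cancel_left, abs_mul, abs_of_pos (div_pos hp (by linarith))]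
    calc _ ≤ (R₂ - R₁) / n / P1 * Yb := by
          apply mul_le_mul _ a2 (abs_nonneg _) (by positivity)
          exact div_le_div_of_nonneg_left hp.le hP1 a1
      _ = _ := by rw [hC2]; ring
  set l : Ultrafilter ℕ := hyperfilter ℕ with hl
  have hlt : (l : Filter ℕ) ≤ atTop := Nat.hyperfilter_le_atTop
  have evn : ∀ᶠ n in (l : Filter ℕ), n0 ≤ n := hlt (eventually_ge_atTop n0)
  have comp : ∀ (f : ℕ → ℝ) (a b : ℝ), (∀ n, n0 ≤ n → f n ∈ Icc a b) →
      ∃ x ∈ Icc a b, Tendsto f l (nhds x) := by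
    intro f a b hf
    obtain ⟨x, hx, hx2⟩ := (isCompact_Icc (a := a) (b := b)).ultrafilter_le_nhds (l.map f) (by
      rw [le_principal_iff, Ultrafilter.mem_coe, Ultrafilter.mem_map]
      filter_upwards [evn] with n hn
      exact hf n hn)
    exact ⟨x, hx, hx2⟩
  have hI : ∀ t ∈ Icc R₁ R₂, ∀ n, n0 ≤ n → auxI R₁ R₂ n t ≤ n := fun t ht n hn =>
    (auxI_spec R₁ R₂ h12 n (by omega) t ht).2.2
  have exW : ∀ t, ∃ x, t ∈ Icc R₁ R₂ → x ∈ Icc 0 K ∧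
      Tendsto (fun n => w n (auxI R₁ R₂ n t)) l (nhds x) := by
    intro t
    by_cases ht : t ∈ Icc R₁ R₂
    · obtain ⟨x, h1, h2⟩ := comp (fun n => w n (auxI R₁ R₂ n t)) 0 K
        (fun n hn => wb n hn _ (hI t ht n hn))
      exact ⟨x, fun _ => ⟨h1, h2⟩⟩
    · exact ⟨0, fun h => absurd h ht⟩
  have exY : ∀ t, ∃ x, t ∈ Icc R₁ R₂ →
      Tendsto (fun n => y n (auxI R₁ R₂ n t)) l (nhds x) := by
    intro t
    by_cases ht : t ∈ Icc R₁ R₂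
    · obtain ⟨x, h1, h2⟩ := comp (fun n => y n (auxI R₁ R₂ n t)) (-Yb) Yb
        (fun n hn => abs_le.1 (yb n hn _ (hI t ht n hn)))
      exact ⟨x, fun _ => h2⟩
    · exact ⟨0, fun h => absurd h ht⟩
  choose W hW using exW
  choose Y hY using exY
  have i1 : ∀ n, auxI R₁ R₂ n R₁ = 0 := fun n => by simp [auxI]
  have i2 : ∀ n, n0 ≤ n → auxI R₁ R₂ n R₂ = n := fun n hn => by
    have hn' : (n:ℝ) ≠ 0 := by exact_mod_cast (by omega : n ≠ 0)
    have : (R₂ - R₁) / ((R₂ - R₁) / n) = n := by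
      have := hL.ne'
      field_simp
    rw [auxI, this, Nat.floor_natCast]
  have mR1 : R₁ ∈ Icc R₁ R₂ := ⟨le_rfl, h12.le⟩
  have mR2 : R₂ ∈ Icc R₁ R₂ := ⟨h12.le, le_rfl⟩
  have hpne : ∀ r ∈ Icc R₁ R₂, p r ≠ 0 := fun r hr => (lt_of_lt_of_le hP1 (hp1 r hr)).ne'
  have cfst : ∀ f : ℝ → ℝ, ContinuousOn f (Icc R₁ R₂) →
      ContinuousOn (fun z : ℝ × ℝ => f z.1) (Icc R₁ R₂ ×ˢ univ) := fun f hf =>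
    hf.comp continuous_fst.continuousOn (fun z hz => hz.1)
  refine ⟨W, Y, ?_, ?_, fun r hr => (hW r hr).1, ?_, ?_, ?_⟩
  · intro r hr
    refine aux_lim R₁ R₂ h12 (fun r x => x / p r) ?_ w y (fun n k => y n (k+1)) C1 hC10.le n0 hn0
      ?_ ystep ystep l hlt W Y (fun t ht => (hW t ht).2) hY r hr
    · exact continuous_snd.continuousOn.div (cfst p hpc) (fun z hz => hpne _ hz.1)
    · intro n hn k hk
      rw [(hwy n hn).1.2.1 k]; ring
  · intro r hr
    refine aux_lim R₁ R₂ h12 (fun r x => -(ν * (p r * Q r) * G x)) ?_ y w w C2 hC20.le n0 hn0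
      ?_ ?_ wstep l hlt Y W hY (fun t ht => (hW t ht).2) r hr
    · exact ((continuousOn_const.mul ((cfst p hpc).mul (cfst Q hQc))).mul
        (hGc.comp continuous_snd).continuousOn).neg
    · intro n hn k hk
      rw [(hwy n hn).1.1 k]; ring
    · intro n hn k hk
      have := hpos n hn
      rw [sub_self, abs_zero]; positivity
  · refine ge_of_tendsto (hW R₁ mR1).2 ?_
    filter_upwards [evn] with n hn
    rw [i1]; exact (hwy n hn).2.1
  · refine tendsto_nhds_unique (hY R₁ mR1) (tendsto_const_nhds.congr' ?_)
    filter_upwards [evn] with n hn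
    rw [i1]; exact (hwy n hn).1.2.2.symm
  · refine tendsto_nhds_unique (hY R₂ mR2) (tendsto_const_nhds.congr' ?_)
    filter_upwards [evn] with n hn
    rw [i2 n hn]; exact (hwy n hn).2.2.1.symm

lemma aux_pos (p : ℝ → ℝ) (R₁ R₂ P1 ν A K C0 : ℝ) (Q G : ℝ → ℝ) (h12 : R₁ < R₂)
    (hP1 : 0 < P1) (hp1 : ∀ r ∈ Icc R₁ R₂, P1 ≤ p r) (hν : 0 < ν)
    (hA : 0 < A) (hfA : ∀ r ∈ Icc R₁ R₂, |p r * Q r| ≤ A)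
    (hC0 : 0 < C0) (hGC : ∀ s ∈ Icc 0 K, |G s| ≤ C0 * s)
    (W Y : ℝ → ℝ)
    (hW : ∀ r ∈ Icc R₁ R₂, HasDerivWithinAt W (Y r / p r) (Icc R₁ R₂) r)
    (hY : ∀ r ∈ Icc R₁ R₂, HasDerivWithinAt Y (-(ν * (p r * Q r) * G (W r))) (Icc R₁ R₂) r)
    (hWK : ∀ r ∈ Icc R₁ R₂, 0 ≤ W r ∧ W r ≤ K) (hW1 : 0 < W R₁) (hY2 : Y R₂ = 0) :
    ∀ r ∈ Icc R₁ R₂, 0 < W r := by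
  intro t ht
  refine lt_of_le_of_ne (hWK t ht).1 (fun h0 => ?_)
  have ht1 : R₁ < t := lt_of_le_of_ne ht.1 (fun h => by rw [h] at hW1; linarith)
  have hYt : Y t = 0 := by
    rcases eq_or_lt_of_le ht.2 with h | h
    · rw [h, hY2]
    · have hd := (hW t ht).hasDerivAt (Icc_mem_nhds ht1 h)
      have hmin : IsLocalMin W t := by
        filter_upwards [Icc_mem_nhds ht1 h] with r hr
        rw [← h0]; exact (hWK r hr).1
      have := hmin.hasDerivAt_eq_zero hd
      have hp := lt_of_lt_of_le hP1 (hp1 t ht)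
      rcases div_eq_zero_iff.1 this with h | h
      · exact h
      · exact absurd h hp.ne'
  set D := 1 / P1 + ν * A * C0 with hD
  set φ : ℝ → ℝ := fun r => (W r ^ 2 + Y r ^ 2) * Real.exp (D * r) with hφ
  have hsub : Icc R₁ t ⊆ Icc R₁ R₂ := Icc_subset_Icc le_rfl ht.2
  have hmono : MonotoneOn φ (Icc R₁ t) := by
    have hcW : ContinuousOn W (Icc R₁ R₂) := fun r hr => (hW r hr).continuousWithinAt
    have hcY : ContinuousOn Y (Icc R₁ R₂) := fun r hr => (hY r hr).continuousWithinAt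
    have hder : ∀ r ∈ Ioo R₁ t, HasDerivAt φ ((2 * W r * (Y r / p r) +
        2 * Y r * (-(ν * (p r * Q r) * G (W r)))) * Real.exp (D * r) +
        (W r ^ 2 + Y r ^ 2) * (Real.exp (D * r) * D)) r := by
      intro r hr
      have hrm : r ∈ Icc R₁ R₂ := hsub ⟨hr.1.le, hr.2.le⟩
      have hn : Icc R₁ R₂ ∈ nhds r := Icc_mem_nhds hr.1 (lt_of_lt_of_le hr.2 ht.2)
      have d1 := (hW r hrm).hasDerivAt hn
      have d2 := (hY r hrm).hasDerivAt hn
      have d3 : HasDerivAt (fun r => Real.exp (D * r)) (Real.exp (D * r) * D) r := by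
        have := ((hasDerivAt_id r).const_mul D).exp
        simpa using this
      have d1' : HasDerivAt (fun r => W r ^ 2) (2 * W r * (Y r / p r)) r := by
        simpa using d1.fun_pow 2
      have d2' : HasDerivAt (fun r => Y r ^ 2) (2 * Y r * (-(ν * (p r * Q r) * G (W r)))) r := by
        simpa using d2.fun_pow 2
      exact (d1'.fun_add d2').fun_mul d3
    apply monotoneOn_of_deriv_nonneg (convex_Icc _ _)
    · exact ((((hcW.pow 2).add (hcY.pow 2)).mul (by fun_prop)).mono hsub)
    · rw [interior_Icc]
      intro r hr
      exact (hder r hr).differentiableAt.differentiableWithinAt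
    · rw [interior_Icc]
      intro r hr
      rw [(hder r hr).deriv]
      have hrm : r ∈ Icc R₁ R₂ := hsub ⟨hr.1.le, hr.2.le⟩
      have hp := hp1 r hrm
      have hp0 : 0 < p r := lt_of_lt_of_le hP1 hp
      obtain ⟨w0, wK⟩ := hWK r hrm
      have g1 := hGC (W r) ⟨w0, wK⟩
      have f1 := hfA r hrm
      have b1 : |W r * (Y r / p r)| ≤ W r * |Y r| * (1 / P1) := by
        rw [abs_mul, abs_div, abs_of_pos hp0, abs_of_nonneg w0]
        have : |Y r| / p r ≤ |Y r| / P1 := div_le_div_of_nonneg_left (abs_nonneg _) hP1 hp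
        have := mul_le_mul_of_nonneg_left this w0
        calc _ ≤ _ := this
          _ = _ := by ring
      have b2 : |Y r * (ν * (p r * Q r) * G (W r))| ≤ W r * |Y r| * (ν * A * C0) := by
        rw [abs_mul, abs_mul, abs_mul, abs_of_pos hν]
        have : ν * |p r * Q r| * |G (W r)| ≤ ν * A * (C0 * W r) :=
          mul_le_mul (mul_le_mul_of_nonneg_left f1 hν.le) g1 (abs_nonneg _) (by positivity)
        have := mul_le_mul_of_nonneg_left this (abs_nonneg (Y r))
        calc _ ≤ _ := this
          _ = _ := by ring
      have b3 := (abs_le.1 b1).1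
      have b4 := (abs_le.1 b2).2
      have b5 : 2 * (W r * |Y r|) ≤ W r ^ 2 + Y r ^ 2 := by
        have := sq_nonneg (W r - |Y r|)
        have h2 := sq_abs (Y r)
        nlinarith
      have hD0 : 0 < D := by positivity
      have b6 : 2 * (W r * |Y r|) * D ≤ (W r ^ 2 + Y r ^ 2) * D :=
        mul_le_mul_of_nonneg_right b5 hD0.le
      have b7 : 0 ≤ 2 * W r * (Y r / p r) + 2 * Y r * (-(ν * (p r * Q r) * G (W r))) +
          (W r ^ 2 + Y r ^ 2) * D := by
        have : 2 * (W r * |Y r|) * D = 2 * (W r * |Y r| * (1 / P1)) +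
          2 * (W r * |Y r| * (ν * A * C0)) := by rw [hD]; ring
        linarith
      have := mul_nonneg b7 (Real.exp_pos (D * r)).le
      linarith
  have := hmono ⟨le_rfl, ht1.le⟩ ⟨ht1.le, le_rfl⟩ ht1.le
  simp only [hφ, ← h0, hYt] at this
  have e1 : 0 < (W R₁ ^ 2 + Y R₁ ^ 2) * Real.exp (D * R₁) := by positivity
  norm_num at this
  linarith

/-- Theorem: for `N ≥ 2`, `0 < R₁ < R₂`, a continuous radial weight `Q`
satisfying (q1) and (q2), and `g` satisfying (g1), regularly oscillating at
zero, with `g(s)/s → 0` as `s → 0⁺` and `liminf_{s→+∞} g(s)/s > 0`, the Neumann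
problem `−Δu = ν Q(‖x‖) g(u)` on the annulus has a positive radially symmetric
solution for every sufficiently large `ν`. -/
theorem statement_12
    (N : ℕ) (hN : 2 ≤ N) (R₁ R₂ : ℝ) (hR1 : 0 < R₁) (hR12 : R₁ < R₂)
    (Q : ℝ → ℝ) (hQc : ContinuousOn Q (Icc R₁ R₂))
    (hq1 : CondQ1 R₁ R₂ Q)
    (hq2 : (∫ r in R₁..R₂, r ^ (N - 1) * Q r) < 0)
    (g : ℝ → ℝ) (hg1 : CondG1 g) (hreg : RegOscAtZero g)
    (hg0 : Tendsto (fun s => g s / s) (nhdsWithin 0 (Ioi 0)) (nhds 0))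
    (hginf : (0 : EReal) < GrowthLiminf g) :
    ∃ νs : ℝ, 0 < νs ∧ ∀ ν : ℝ, νs < ν →
      RadialNeumannPosSol N R₁ R₂ (fun r => ν * Q r) g := by
  obtain ⟨hgc, hgn, hg00, hgp⟩ := hg1
  set p : ℝ → ℝ := fun r => r ^ (N - 1) with hp
  set P1 := R₁ ^ (N - 1) with hP1d
  set P2 := R₂ ^ (N - 1) with hP2d
  have hP1 : 0 < P1 := by positivity
  have hp1 : ∀ r, R₁ ≤ r → P1 ≤ p r := fun r hr => pow_le_pow_left₀ hR1.le hr _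
  have hp1' : ∀ r ∈ Icc R₁ R₂, P1 ≤ p r := fun r hr => hp1 r hr.1
  have hp2 : ∀ r ∈ Icc R₁ R₂, p r ≤ P2 := fun r hr =>
    pow_le_pow_left₀ (hR1.le.trans hr.1) hr.2 _
  have hpc : ContinuousOn p (Icc R₁ R₂) := by
    simp only [hp]; fun_prop
  set G : ℝ → ℝ := fun s => g (max s 0) with hGd
  have hGc : Continuous G :=
    hgc.comp_continuous (by fun_prop) (fun s => mem_Ici.2 (le_max_right s 0))
  have hGe : ∀ s, 0 ≤ s → G s = g s := fun s hs => by simp only [hGd, max_eq_left hs]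
  have hGn : ∀ s, 0 ≤ G s := fun s => hgn _ (le_max_right _ _)
  have hGp : ∀ s, 0 < s → 0 < G s := fun s hs => by rw [hGe s hs.le]; exact hgp s hs
  have hG0 : G 0 = 0 := by rw [hGe 0 le_rfl, hg00]
  -- growth at infinity
  obtain ⟨lam, hlam, M, hM, hGM⟩ : ∃ lam : ℝ, 0 < lam ∧ ∃ M : ℝ, 0 < M ∧
      ∀ s, M ≤ s → lam * s ≤ G s := by
    obtain ⟨lam, h1, h2⟩ := EReal.lt_iff_exists_real_btwn.1 hginf
    have h1' : 0 < lam := by exact_mod_cast h1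
    have ev := Filter.eventually_lt_of_lt_liminf h2
    obtain ⟨M, hM⟩ := eventually_atTop.1 ev
    refine ⟨lam, h1', max M 1, lt_of_lt_of_le one_pos (le_max_right _ _), fun s hs => ?_⟩
    have hs0 : 0 < s := lt_of_lt_of_le one_pos ((le_max_right _ _).trans hs)
    have := hM s ((le_max_left _ _).trans hs)
    have h3 : lam < g s / s := by exact_mod_cast this
    rw [lt_div_iff₀ hs0] at h3
    rw [hGe s hs0.le]; exact h3.le
  -- behaviour at zero
  have hGsmall : ∀ ε : ℝ, 0 < ε → ∃ δ > (0:ℝ), ∀ s, 0 < s → s < δ → G s ≤ ε * s := by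
    intro ε hε
    have ev := hg0.eventually (gt_mem_nhds hε)
    rw [eventually_iff, mem_nhdsGT_iff_exists_Ioo_subset] at ev
    obtain ⟨δ, hδ, hsub⟩ := ev
    refine ⟨δ, hδ, fun s h1 h2 => ?_⟩
    have : g s / s < ε := hsub ⟨h1, h2⟩
    rw [div_lt_iff₀ h1] at this
    rw [hGe s h1.le]; exact this.le
  have hGreg : ∀ ε : ℝ, 0 < ε → ∃ δ > (0:ℝ), ∃ η > (0:ℝ), ∀ s t : ℝ, 0 < s → s < δ →
      |t - s| ≤ η * s → |G t - G s| ≤ ε * G s := by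
    intro ε hε
    obtain ⟨δ, hδ, η, hη, H⟩ := hreg ε hε
    refine ⟨δ, hδ, min η 1 / 2, by positivity, fun s t h1 h2 h3 => ?_⟩
    have m1 := min_le_left η 1
    have m2 := min_le_right η 1
    have m3 : 0 < min η 1 := lt_min hη one_pos
    have hts : |t / s - 1| ≤ min η 1 / 2 := by
      rw [show t / s - 1 = (t - s) / s by field_simp, abs_div, abs_of_pos h1, div_le_iff₀ h1]
      exact h3
    have ht : 0 ≤ t := by
      have := (abs_le.1 h3).1
      nlinarith
    have := H s (t / s) h1 h2 (by linarith)
    rw [div_mul_cancel₀ _ h1.ne'] at this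
    rw [hGe s h1.le, hGe t ht]
    have gs := hgp s h1
    rw [show g t / g s - 1 = (g t - g s) / g s by field_simp, abs_div, abs_of_pos gs,
      div_lt_iff₀ gs] at this
    exact this.le
  obtain ⟨ν0, hν0, K, n1, hn1, hex, hhump⟩ := aux_all_humps p R₁ R₂ P1 P2 Q G hR12 hQc hq1 hP1 hp1'
    hp2 hGn lam M hlam hM hGM
  obtain ⟨κ, hκ, n2, hriem⟩ := aux_riemann R₁ R₂ hR12 (fun r => p r * Q r) (hpc.mul hQc) hq2
  obtain ⟨A0, hA0⟩ := isCompact_Icc.exists_bound_of_continuousOn (hpc.mul hQc)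
  obtain ⟨A, hA, hfA⟩ : ∃ A : ℝ, 0 < A ∧ ∀ r ∈ Icc R₁ R₂, |p r * Q r| ≤ A :=
    ⟨max A0 1, lt_of_lt_of_le one_pos (le_max_right _ _),
      fun r hr => (hA0 r hr).trans (le_max_left _ _)⟩
  obtain ⟨Gm0, hGm0⟩ := (isCompact_Icc (a := (0:ℝ)) (b := K)).exists_bound_of_continuousOn
    hGc.continuousOn
  obtain ⟨Gm, hGmp, hGm⟩ : ∃ A : ℝ, 0 < A ∧ ∀ s ∈ Icc 0 K, |G s| ≤ A :=
    ⟨max Gm0 1, lt_of_lt_of_le one_pos (le_max_right _ _),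
      fun r hr => (hGm0 r hr).trans (le_max_left _ _)⟩
  obtain ⟨C0, hC0, hGC⟩ : ∃ C0 : ℝ, 0 < C0 ∧ ∀ s ∈ Icc 0 K, |G s| ≤ C0 * s := by
    obtain ⟨δ, hδ, hd⟩ := hGsmall 1 one_pos
    refine ⟨1 + Gm / δ, by positivity, fun s hs => ?_⟩
    have hq : 0 < Gm / δ := by positivity
    rcases eq_or_lt_of_le hs.1 with h | h
    · rw [← h, hG0]; simp
    · rcases lt_or_ge s δ with h2 | h2
      · rw [abs_of_nonneg (hGn s)]
        have := hd s h h2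
        nlinarith
      · have := hGm s hs
        have h3 : Gm ≤ Gm / δ * s := by
          rw [div_mul_eq_mul_div, le_div_iff₀ hδ]
          exact mul_le_mul_of_nonneg_left h2 hGmp.le
        linarith
  refine ⟨ν0, hν0, fun ν hν => ?_⟩
  have hνp : 0 < ν := hν0.trans hν
  obtain ⟨α0, hα0, hsm⟩ := aux_small p R₁ R₂ P1 A κ ν Q G hR12 hP1 hp1' hA hκ hνp hfA n2 hriem hGn
    hGp hGreg hGsmall
  obtain ⟨W, Y, hW, hY, hWK, hW1, hY1, hY2⟩ := aux_ode p R₁ R₂ P1 ν A Gm K α0 Q G hR12 hP1 hp1' hνp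
    hpc hQc hGc hA hfA hGmp hGm (max n1 n2) (by omega) (fun n hn =>
      aux_discrete p R₁ R₂ P1 ν Q G hR12 hP1 hp1 hνp hGn hGc hG0 n (by omega) K α0 hα0
        (hhump ν hν n (by omega)) (hex n (by omega)) (hsm n (by omega) (by omega)))
  have hpos := aux_pos p R₁ R₂ P1 ν A K C0 Q G hR12 hP1 hp1' hνp hA hfA hC0 hGC W Y hW hY hWK
    (lt_of_lt_of_le hα0 hW1) hY2
  have hcW : ContinuousOn W (Icc R₁ R₂) := fun r hr => (hW r hr).continuousWithinAt
  have hcY : ContinuousOn Y (Icc R₁ R₂) := fun r hr => (hY r hr).continuousWithinAt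
  have hrne : ∀ r ∈ Icc R₁ R₂, r ≠ 0 := fun r hr => (lt_of_lt_of_le hR1 hr.1).ne'
  have hpne : ∀ r ∈ Icc R₁ R₂, p r ≠ 0 := fun r hr => (lt_of_lt_of_le hP1 (hp1' r hr)).ne'
  refine ⟨W, fun r => Y r / p r,
    fun r => -((((N : ℝ) - 1) / r) * (Y r / p r)) - ν * Q r * G (W r), hW, ?_, ?_, hpos, ?_, ?_, ?_⟩
  · intro r hr
    have hr0 := hrne r hr
    have hpd : HasDerivWithinAt p (((N - 1 : ℕ) : ℝ) * r ^ (N - 1 - 1)) (Icc R₁ R₂) r :=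
      (hasDerivAt_pow (N - 1) r).hasDerivWithinAt
    refine ((hY r hr).fun_div hpd (hpne r hr)).congr_deriv ?_
    obtain ⟨k, rfl⟩ : ∃ k, N = k + 2 := ⟨N - 2, by omega⟩
    have e1 : k + 2 - 1 = k + 1 := by omega
    have e2 : k + 1 - 1 = k := by omega
    simp only [hp, e1, e2]
    push_cast
    field_simp
    ring
  · refine ContinuousOn.sub (ContinuousOn.neg (ContinuousOn.mul ?_ (hcY.div hpc hpne))) ?_
    · exact continuousOn_const.div continuousOn_id hrne
    · exact (continuousOn_const.mul hQc).mul (hGc.comp_continuousOn hcW)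
  · intro r hr
    beta_reduce
    rw [hGe _ (hWK r hr).1]
    ring
  · simp only [hY1, zero_div]
  · simp only [hY2, zero_div]
end

section
/- Let N ≥ 2 be an integer, 0 < R₁ < R₂, and let Q : [R₁,R₂] → ℝ be continuous with ∫_{R₁}^{R₂} r^{N−1} Q(r) dr < 0 and such that Q(r₀) > 0 for some r₀ ∈ (R₁,R₂). Let g satisfy (g1), be regularly oscillating at zero, and satisfy lim_{s→0⁺} g(s)/s = 0 and 0 < liminf_{s→+∞} g(s)/s ≤ limsup_{s→+∞} g(s)/s < +∞. Then there exists ν* > 0 such that for every ν > ν* there exists a C² function w : [R₁,R₂] → ℝ with w(r) > 0 for all r ∈ [R₁,R₂], w''(r) + ((N−1)/r) w'(r) + ν Q(r) g(w(r)) = 0 for all r ∈ [R₁,R₂], and w'(R₁) = w'(R₂) = 0; that is, the Neumann problem −Δu = ν Q(‖x‖) g(u) on the annulus {x ∈ ℝᴺ : R₁ < ‖x‖ < R₂} has at least one positive radially symmetric solution u(x) = w(‖x‖) for each ν > ν*. -/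
open MeasureTheory Set Filter

def IsSol (a b : ℝ) (ρ h G : ℝ → ℝ) (c : ℝ) (u y : ℝ → ℝ) : Prop :=
  (∀ t, HasDerivAt u (ρ t * y t) t) ∧
  (∀ t ∈ Icc a b, HasDerivAt y (-(h t * G (u t))) t) ∧ u a = c ∧ y a = 0

lemma energy {a b : ℝ} {v η e ρ : ℝ → ℝ} {P L : ℝ} (hL : 0 ≤ L)
    (hv : ∀ t ∈ Icc a b, HasDerivAt v (ρ t * η t) t)
    (hη : ∀ t ∈ Icc a b, HasDerivAt η (-e t) t)
    (hρ : ∀ t, |ρ t| ≤ P) (he : ∀ t ∈ Icc a b, |e t| ≤ L * |v t|) :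
    ∀ s ∈ Icc a b, ∀ t ∈ Icc a b, s ≤ t →
      (v t ^ 2 + η t ^ 2 ≤ (v s ^ 2 + η s ^ 2) * Real.exp ((P + L) * (t - s))) ∧
      (v s ^ 2 + η s ^ 2 ≤ (v t ^ 2 + η t ^ 2) * Real.exp ((P + L) * (t - s))) := by
  have hF : ∀ t ∈ Icc a b, HasDerivAt (fun t => v t ^ 2 + η t ^ 2)
      (2 * v t * (ρ t * η t) + 2 * η t * (-e t)) t := by
    intro t ht
    have := ((hv t ht).pow 2).add ((hη t ht).pow 2)
    exact this.congr_deriv (by norm_num)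
  have hFb : ∀ t ∈ Icc a b, |2 * v t * (ρ t * η t) + 2 * η t * (-e t)| ≤
      (P + L) * (v t ^ 2 + η t ^ 2) := by
    intro t ht
    have h1 : |2 * v t * (ρ t * η t)| ≤ P * (2 * (|v t| * |η t|)) := by
      rw [show 2 * v t * (ρ t * η t) = ρ t * (2 * (v t * η t)) by ring, abs_mul, abs_mul, abs_mul,
        abs_two]
      exact mul_le_mul_of_nonneg_right (hρ t) (by positivity)
    have h2 : |2 * η t * (-e t)| ≤ L * (2 * (|v t| * |η t|)) := by
      rw [abs_mul, abs_mul, abs_neg, abs_two]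
      nlinarith [mul_le_mul_of_nonneg_left (he t ht) (abs_nonneg (η t))]
    have h3 : 2 * (|v t| * |η t|) ≤ v t ^ 2 + η t ^ 2 := by
      nlinarith [sq_nonneg (|v t| - |η t|), sq_abs (v t), sq_abs (η t)]
    have hP : 0 ≤ P := (abs_nonneg _).trans (hρ t)
    calc _ ≤ _ := abs_add_le _ _
      _ ≤ (P + L) * (2 * (|v t| * |η t|)) := by linarith
      _ ≤ _ := mul_le_mul_of_nonneg_left h3 (by linarith)
  have hE : ∀ k : ℝ, ∀ t, HasDerivAt (fun t => Real.exp (k * t)) (Real.exp (k * t) * k) t := by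
    intro k t
    have := ((hasDerivAt_id t).const_mul k).exp
    simpa using this
  have hprod : ∀ k : ℝ, ∀ t ∈ Icc a b, HasDerivAt
      (fun t => (v t ^ 2 + η t ^ 2) * Real.exp (k * t))
      ((2 * v t * (ρ t * η t) + 2 * η t * (-e t)) * Real.exp (k * t) +
        (v t ^ 2 + η t ^ 2) * (Real.exp (k * t) * k)) t :=
    fun k t ht => (hF t ht).mul (hE k t)
  have hmono : MonotoneOn (fun t => (v t ^ 2 + η t ^ 2) * Real.exp ((P + L) * t)) (Icc a b) := by
    apply monotoneOn_of_deriv_nonneg (convex_Icc a b)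
    · exact fun t ht => (hprod _ t ht).continuousAt.continuousWithinAt
    · exact fun t ht => (hprod _ t (interior_subset ht)).differentiableAt.differentiableWithinAt
    · intro t ht
      rw [(hprod _ t (interior_subset ht)).deriv]
      have := (abs_le.1 (hFb t (interior_subset ht))).1
      nlinarith [mul_le_mul_of_nonneg_right this (Real.exp_pos ((P + L) * t)).le]
  have hanti : AntitoneOn (fun t => (v t ^ 2 + η t ^ 2) * Real.exp (-(P + L) * t)) (Icc a b) := by
    apply antitoneOn_of_deriv_nonpos (convex_Icc a b)
    · exact fun t ht => (hprod _ t ht).continuousAt.continuousWithinAt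
    · exact fun t ht => (hprod _ t (interior_subset ht)).differentiableAt.differentiableWithinAt
    · intro t ht
      rw [(hprod _ t (interior_subset ht)).deriv]
      have := (abs_le.1 (hFb t (interior_subset ht))).2
      nlinarith [mul_le_mul_of_nonneg_right this (Real.exp_pos (-(P + L) * t)).le]
  intro s hs t ht hst
  constructor
  · have h1 := mul_le_mul_of_nonneg_right (hanti hs ht hst) (Real.exp_pos ((P + L) * t)).le
    simp only [mul_assoc, ← Real.exp_add] at h1
    rw [show -(P + L) * t + (P + L) * t = 0 by ring, Real.exp_zero, mul_one,
      show -(P + L) * s + (P + L) * t = (P + L) * (t - s) by ring] at h1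
    exact h1
  · have h1 := mul_le_mul_of_nonneg_right (hmono hs ht hst) (Real.exp_pos (-(P + L) * s)).le
    simp only [mul_assoc, ← Real.exp_add] at h1
    rw [show (P + L) * s + -(P + L) * s = 0 by ring, Real.exp_zero, mul_one,
      show (P + L) * t + -(P + L) * s = (P + L) * (t - s) by ring] at h1
    exact h1

/-- if the solution touches zero then `y b < 0`. -/
lemma touch {a b : ℝ} (hab : a < b) {ρ h G u y : ℝ → ℝ} {c P H K : ℝ} (hc : 0 < c)
    (hρc : Continuous ρ) (hρ0 : ∀ t, 0 < ρ t)
    (hρ : ∀ t, |ρ t| ≤ P) (hh : ∀ t, |h t| ≤ H) (hK : 0 ≤ K)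
    (hG0 : ∀ s, 0 ≤ G s) (hG : ∀ s, G s ≤ K * max s 0)
    (hs : IsSol a b ρ h G c u y) {s : ℝ} (hsm : s ∈ Icc a b) (hus : u s ≤ 0) : y b < 0 := by
  obtain ⟨hu, hy, hua, hya⟩ := hs
  have hH : 0 ≤ H := (abs_nonneg _).trans (hh 0)
  set I : ℝ → ℝ := fun t => ∫ x in s..t, ρ x with hI
  have hId : ∀ t, HasDerivAt I (ρ t) t := fun t =>
    intervalIntegral.integral_hasDerivAt_right (hρc.intervalIntegrable _ _)
      hρc.stronglyMeasurable.stronglyMeasurableAtFilter hρc.continuousAt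
  have hIs : I s = 0 := by simp [hI]
  have hImono : Monotone I := monotone_of_deriv_nonneg (fun t => (hId t).differentiableAt)
    (fun t => by rw [(hId t).deriv]; exact (hρ0 t).le)
  set v : ℝ → ℝ := fun t => u t - (u s + y s * I t) with hv
  set η : ℝ → ℝ := fun t => y t - y s with hη
  have hvd : ∀ t, HasDerivAt v (ρ t * η t) t := by
    intro t
    have := (hu t).sub (((hId t).const_mul (y s)).const_add (u s))
    exact this.congr_deriv (by simp only [hη]; ring)
  have hηd : ∀ t ∈ Icc a b, HasDerivAt η (-(h t * G (u t))) t := fun t ht => (hy t ht).sub_const _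
  have key : ∀ t, u s + y s * I t ≤ 0 → |h t * G (u t)| ≤ H * K * |v t| := by
    intro t ht
    have h1 : max (u t) 0 ≤ |v t| := by
      apply max_le _ (abs_nonneg _)
      refine le_trans ?_ (le_abs_self _)
      simp only [hv]; linarith
    rw [abs_mul, abs_of_nonneg (hG0 _), mul_assoc]
    exact mul_le_mul (hh t) ((hG _).trans (mul_le_mul_of_nonneg_left h1 hK)) (hG0 _) hH
  have hvs : v s = 0 := by simp [hv, hIs]
  have hηs : η s = 0 := by simp [hη]
  rcases lt_or_ge (y s) 0 with hlt | hge
  · have := (energy (a := s) (b := b) (mul_nonneg hH hK) (fun t _ => hvd t)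
      (fun t ht => hηd t ⟨hsm.1.trans ht.1, ht.2⟩) hρ (fun t ht => key t (by
        have := hImono ht.1
        rw [hIs] at this
        nlinarith)) s ⟨le_rfl, hsm.2⟩ b ⟨hsm.2, le_rfl⟩ hsm.2).1
    rw [hvs, hηs] at this
    have h2 : η b = 0 := by nlinarith [sq_nonneg (v b), sq_nonneg (η b)]
    simp only [hη] at h2
    linarith
  · exfalso
    have hle : ∀ t ≤ s, u s + y s * I t ≤ 0 := by
      intro t ht
      have := hImono ht
      rw [hIs] at this
      nlinarith
    have := (energy (a := a) (b := s) (mul_nonneg hH hK) (fun t _ => hvd t)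
      (fun t ht => hηd t ⟨ht.1, ht.2.trans hsm.2⟩) hρ (fun t ht => key t (hle t ht.2))
        a ⟨le_rfl, hsm.1⟩ s ⟨hsm.1, le_rfl⟩ hsm.1).2
    rw [hvs, hηs] at this
    have h2 : v a = 0 := by nlinarith [sq_nonneg (v a), sq_nonneg (η a)]
    have h3 := hle a hsm.1
    simp only [hv] at h2
    linarith
lemma ftc {f : ℝ → ℝ} (hf : Continuous f) (a t : ℝ) :
    HasDerivAt (fun t => ∫ x in a..t, f x) (f t) t :=
  intervalIntegral.integral_hasDerivAt_right (hf.intervalIntegrable _ _)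
      hf.stronglyMeasurable.stronglyMeasurableAtFilter hf.continuousAt

lemma compact_sol {a b : ℝ} (hab : a < b) {ρ h G : ℝ → ℝ} {P H B : ℝ}
    (hρc : Continuous ρ) (hhc : Continuous h) (hGc : Continuous G)
    (hρ : ∀ t, |ρ t| ≤ P) (hh : ∀ t, |h t| ≤ H) (hGB : ∀ t, |G t| ≤ B)
    {c0 C0 : ℝ} (δ : ℕ → ℝ) (hδ0 : ∀ n, 0 ≤ δ n) (hδ : Tendsto δ atTop (nhds 0))
    (c : ℕ → ℝ) (hc : ∀ n, c n ∈ Icc c0 C0) (u : ℕ → ℝ → ℝ) (hu : ∀ n, Continuous (u n))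
    (heq : ∀ n, ∀ t ∈ Icc a b, u n t = c n +
      ∫ s in a..t, ρ s * (-∫ x in a..s, h x * G (u n (max a (x - δ n))))) :
    ∃ c' ∈ Icc c0 C0, ∃ U Y, IsSol a b ρ h G c' U Y ∧ ∃ φ : ℕ → ℕ, StrictMono φ ∧
      Tendsto (c ∘ φ) atTop (nhds c') ∧
      Tendsto (fun n => -∫ x in a..b, h x * G (u (φ n) (max a (x - δ (φ n))))) atTop
        (nhds (Y b)) := by
  have hP : 0 ≤ P := (abs_nonneg _).trans (hρ 0)
  have hH : 0 ≤ H := (abs_nonneg _).trans (hh 0)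
  have hB : 0 ≤ B := (abs_nonneg _).trans (hGB 0)
  have ha : a ∈ Icc a b := ⟨le_rfl, hab.le⟩
  have hb : b ∈ Icc a b := ⟨hab.le, le_rfl⟩
  set k : ℕ → ℝ → ℝ := fun n x => h x * G (u n (max a (x - δ n))) with hk
  have hkc : ∀ n, Continuous (k n) := by
    intro n
    have := hu n
    simp only [hk]; fun_prop
  have hkb : ∀ n x, |k n x| ≤ H * B := by
    intro n x
    simp only [hk, abs_mul]
    exact mul_le_mul (hh x) (hGB _) (abs_nonneg _) hH
  set v : ℕ → ℝ → ℝ := fun n s => -∫ x in a..s, k n x with hv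
  have hvc : ∀ n, Continuous (v n) := fun n =>
    continuous_iff_continuousAt.2 fun t => (ftc (hkc n) a t).neg.continuousAt
  have hvb : ∀ n, ∀ s ∈ Icc a b, |v n s| ≤ H * B * (b - a) := by
    intro n s hs
    have := intervalIntegral.norm_integral_le_of_norm_le_const (a := a) (b := s) (f := k n)
      (C := H * B) (fun x _ => hkb n x)
    simp only [hv, abs_neg]
    refine this.trans ?_
    rw [abs_of_nonneg (by linarith [hs.1])]
    exact mul_le_mul_of_nonneg_left (by linarith [hs.2]) (mul_nonneg hH hB)
  set Λ := P * (H * B * (b - a)) with hΛ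
  have hΛ0 : 0 ≤ Λ := mul_nonneg hP (mul_nonneg (mul_nonneg hH hB) (by linarith))
  have hρv : ∀ n, ∀ s ∈ Icc a b, |ρ s * v n s| ≤ Λ := by
    intro n s hs
    rw [abs_mul]
    exact mul_le_mul (hρ s) (hvb n s hs) (abs_nonneg _) hP
  have hρvc : ∀ n, Continuous (fun s => ρ s * v n s) := fun n => hρc.mul (hvc n)
  have hlip : ∀ n, ∀ s ∈ Icc a b, ∀ t ∈ Icc a b, |u n s - u n t| ≤ Λ * |s - t| := by
    intro n s hs t ht
    have e : u n s - u n t = ∫ x in t..s, ρ x * v n x := by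
      rw [heq n s hs, heq n t ht, add_sub_add_left_eq_sub]
      exact intervalIntegral.integral_interval_sub_left ((hρvc n).intervalIntegrable _ _)
        ((hρvc n).intervalIntegrable _ _)
    rw [e]
    exact intervalIntegral.norm_integral_le_of_norm_le_const (C := Λ)
      (f := fun x => ρ x * v n x) (fun x hx => hρv n x ((uIcc_subset_Icc ht hs) (uIoc_subset_uIcc hx)))
  have hua : ∀ n, u n a = c n := by
    intro n; rw [heq n a ha]; simp
  let f : ℕ → BoundedContinuousFunction (Icc a b) ℝ := fun n =>
    BoundedContinuousFunction.mkOfCompact ⟨fun t => u n t, (hu n).comp continuous_subtype_val⟩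
  have hf : ∀ n t, f n t = u n t := fun n t => rfl
  have hcomp := BoundedContinuousFunction.arzela_ascoli
    (Icc (c0 - Λ * (b - a)) (C0 + Λ * (b - a))) isCompact_Icc (range f)
    (by
      rintro _ t ⟨n, rfl⟩
      have h1 := hlip n t t.2 a ha
      rw [hua, abs_of_nonneg (show (0:ℝ) ≤ (t:ℝ) - a by linarith [t.2.1])] at h1
      have h2 : Λ * ((t:ℝ) - a) ≤ Λ * (b - a) :=
        mul_le_mul_of_nonneg_left (by linarith [t.2.2]) hΛ0
      have h3 := abs_le.1 (h1.trans h2)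
      rw [hf]
      exact ⟨by linarith [h3.1, (hc n).1], by linarith [h3.2, (hc n).2]⟩)
    (by
      apply Metric.equicontinuous_of_continuity_modulus (fun x => Λ * x)
      · have : Continuous (fun x : ℝ => Λ * x) := by fun_prop
        simpa using this.tendsto 0
      · rintro x y ⟨_, n, rfl⟩
        exact hlip n x x.2 y y.2)
  obtain ⟨F, -, φ, hφ, hlim⟩ := hcomp.tendsto_subseq (x := f) (fun n => subset_closure ⟨n, rfl⟩)
  have hpt : ∀ t : Icc a b, Tendsto (fun n => u (φ n) t) atTop (nhds (F t)) := by
    intro t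
    exact ((BoundedContinuousFunction.lipschitz_eval_const t).continuous.tendsto F).comp hlim
  set V : ℝ → ℝ := fun t => F (projIcc a b hab.le t) with hV
  have hVc : Continuous V := F.continuous.comp continuous_projIcc
  have hpt1 : ∀ t ∈ Icc a b, Tendsto (fun n => u (φ n) t) atTop (nhds (V t)) := by
    intro t ht
    have := hpt ⟨t, ht⟩
    simpa only [hV, projIcc_of_mem hab.le ht] using this
  have hpt2 : ∀ t ∈ Icc a b,
      Tendsto (fun n => u (φ n) (max a (t - δ (φ n)))) atTop (nhds (V t)) := by
    intro t ht
    have hd : Tendsto (fun n => u (φ n) (max a (t - δ (φ n))) - u (φ n) t) atTop (nhds 0) := by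
      apply squeeze_zero_norm (a := fun n => Λ * δ (φ n))
      · intro n
        have hm : max a (t - δ (φ n)) ∈ Icc a b :=
          ⟨le_max_left _ _, max_le hab.le (by linarith [hδ0 (φ n), ht.2])⟩
        refine (hlip _ _ hm t ht).trans (mul_le_mul_of_nonneg_left ?_ hΛ0)
        rw [abs_le]
        constructor
        · linarith [le_max_right a (t - δ (φ n))]
        · have : max a (t - δ (φ n)) ≤ t := max_le ht.1 (by linarith [hδ0 (φ n)])
          linarith [hδ0 (φ n)]
      · have := (hδ.comp hφ.tendsto_atTop).const_mul Λ
        simpa using this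
    have := hd.add (hpt1 t ht)
    simpa using this
  have hhV : Continuous (fun x => h x * G (V x)) := by fun_prop
  set Y : ℝ → ℝ := fun s => -∫ x in a..s, h x * G (V x) with hY
  have hYd : ∀ t, HasDerivAt Y (-(h t * G (V t))) t := fun t => (ftc hhV a t).neg
  have hYc : Continuous Y := continuous_iff_continuousAt.2 fun t => (hYd t).continuousAt
  have hvY : ∀ s ∈ Icc a b, Tendsto (fun n => v (φ n) s) atTop (nhds (Y s)) := by
    intro s hs
    apply Tendsto.neg
    apply intervalIntegral.tendsto_integral_filter_of_dominated_convergence (fun _ => H * B)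
    · exact Eventually.of_forall fun n => (hkc _).aestronglyMeasurable
    · exact Eventually.of_forall fun n => Eventually.of_forall fun x _ => hkb _ _
    · exact intervalIntegrable_const
    · refine Eventually.of_forall fun x hx => ?_
      have hx' : x ∈ Icc a b := (uIcc_subset_Icc ha hs) (uIoc_subset_uIcc hx)
      exact ((hGc.tendsto _).comp (hpt2 x hx')).const_mul (h x)
  have hcV : Tendsto (c ∘ φ) atTop (nhds (V a)) := by
    refine (hpt1 a ha).congr fun n => hua _
  have hρY : Continuous (fun s => ρ s * Y s) := hρc.mul hYc
  set U : ℝ → ℝ := fun t => V a + ∫ s in a..t, ρ s * Y s with hU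
  have hUV : ∀ t ∈ Icc a b, V t = U t := by
    intro t ht
    refine tendsto_nhds_unique (hpt1 t ht) ?_
    have : Tendsto (fun n => c (φ n) + ∫ s in a..t, ρ s * v (φ n) s) atTop (nhds (U t)) := by
      apply Tendsto.add hcV
      apply intervalIntegral.tendsto_integral_filter_of_dominated_convergence (fun _ => Λ)
      · exact Eventually.of_forall fun n => (hρvc _).aestronglyMeasurable
      · exact Eventually.of_forall fun n => Eventually.of_forall fun x hx =>
          hρv _ _ ((uIcc_subset_Icc ha ht) (uIoc_subset_uIcc hx))
      · exact intervalIntegrable_const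
      · refine Eventually.of_forall fun x hx => ?_
        have hx' : x ∈ Icc a b := (uIcc_subset_Icc ha ht) (uIoc_subset_uIcc hx)
        exact (hvY x hx').const_mul _
    exact this.congr fun n => (heq _ t ht).symm
  refine ⟨V a, ?_, U, Y, ⟨?_, ?_, ?_, ?_⟩, φ, hφ, hcV, hvY b hb⟩
  · exact isClosed_Icc.mem_of_tendsto hcV (Eventually.of_forall fun n => hc _)
  · exact fun t => (ftc hρY a t).const_add _
  · intro t ht
    rw [← hUV t ht]; exact hYd t
  · simp [hU]
  · simp [hY]

noncomputable def wk (a : ℝ) (ρ h G : ℝ → ℝ) (δ : ℝ) : ℕ → ℝ → ℝ → ℝ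
  | 0 => fun c _ => c
  | k + 1 => fun c t => c +
      ∫ s in a..t, ρ s * (-∫ x in a..s, h x * G (wk a ρ h G δ k c (max a (x - δ))))

lemma wk_cont {a : ℝ} {ρ h G : ℝ → ℝ} (hρc : Continuous ρ) (hhc : Continuous h)
    (hGc : Continuous G) (δ : ℝ) (k : ℕ) :
    Continuous (fun z : ℝ × ℝ => wk a ρ h G δ k z.1 z.2) := by
  induction k with
  | zero => exact continuous_fst
  | succ k ih =>
    simp only [wk]
    refine continuous_fst.add ?_
    refine intervalIntegral.continuous_parametric_intervalIntegral_of_continuous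
      (f := fun (z : ℝ × ℝ) s => ρ s *
        (-∫ x in a..s, h x * G (wk a ρ h G δ k z.1 (max a (x - δ))))) ?_ continuous_snd
    refine (hρc.comp continuous_snd).mul (Continuous.neg ?_)
    refine intervalIntegral.continuous_parametric_intervalIntegral_of_continuous
      (f := fun (z : (ℝ × ℝ) × ℝ) x => h x * G (wk a ρ h G δ k z.1.1 (max a (x - δ))))
      ?_ continuous_snd
    refine (hhc.comp continuous_snd).mul (hGc.comp ?_)
    exact ih.comp (by fun_prop : Continuous (fun p : ((ℝ × ℝ) × ℝ) × ℝ =>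
      (p.1.1.1, max a (p.2 - δ))))

lemma wk_stab {a : ℝ} {ρ h G : ℝ → ℝ} {δ : ℝ} (hδ : 0 ≤ δ) (k : ℕ) (c t : ℝ) (hat : a ≤ t)
    (ht : t ≤ a + k * δ) : wk a ρ h G δ (k + 1) c t = wk a ρ h G δ k c t := by
  induction k generalizing t with
  | zero =>
    have : t = a := by simp at ht; linarith
    subst this
    simp [wk]
  | succ k ih =>
    rw [wk]
    conv_rhs => rw [wk]
    simp only
    congr 1
    apply intervalIntegral.integral_congr
    intro s hs
    rw [uIcc_of_le hat] at hs
    simp only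
    congr 2
    apply intervalIntegral.integral_congr
    intro x hx
    rw [uIcc_of_le hs.1] at hx
    simp only
    rw [ih _ (le_max_left _ _)]
    push_cast at ht
    apply max_le
    · have : 0 ≤ (k:ℝ) * δ := by positivity
      linarith
    · linarith [hx.2, hs.2]

lemma shooting {a b : ℝ} (hab : a < b) {ρ h G : ℝ → ℝ} {P H B : ℝ}
    (hρc : Continuous ρ) (hhc : Continuous h) (hGc : Continuous G)
    (hρ : ∀ t, |ρ t| ≤ P) (hh : ∀ t, |h t| ≤ H) (hGB : ∀ t, |G t| ≤ B)
    {c0 C0 : ℝ} (hcC : c0 ≤ C0)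
    (h0 : ∀ u y, IsSol a b ρ h G c0 u y → 0 < y b)
    (h1 : ∀ u y, IsSol a b ρ h G C0 u y → y b < 0) :
    ∃ c ∈ Icc c0 C0, ∃ u y, IsSol a b ρ h G c u y ∧ y b = 0 := by
  set δ : ℕ → ℝ := fun n => (b - a) / (n + 1) with hδdef
  have hδ0 : ∀ n, 0 ≤ δ n := fun n => div_nonneg (by linarith) (by positivity)
  have hδ : Tendsto δ atTop (nhds 0) := by
    have := (tendsto_one_div_add_atTop_nhds_zero_nat (𝕜 := ℝ)).const_mul (b - a)
    simpa [hδdef, div_eq_mul_inv] using this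
  set W : ℕ → ℝ → ℝ → ℝ := fun n => wk a ρ h G (δ n) (n + 1) with hW
  have hWc : ∀ n, Continuous (fun z : ℝ × ℝ => W n z.1 z.2) := fun n => wk_cont hρc hhc hGc _ _
  have hWt : ∀ n c, Continuous (W n c) := fun n c =>
    (hWc n).comp (by fun_prop : Continuous (fun t : ℝ => (c, t)))
  have hWeq : ∀ n c, ∀ t ∈ Icc a b, W n c t = c +
      ∫ s in a..t, ρ s * (-∫ x in a..s, h x * G (W n c (max a (x - δ n)))) := by
    intro n c t ht
    have := wk_stab (ρ := ρ) (h := h) (G := G) (hδ0 n) (n + 1) c t ht.1 (by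
      have : ((n + 1 : ℕ) : ℝ) * δ n = b - a := by
        simp only [hδdef]; push_cast; field_simp
      rw [this]; linarith [ht.2])
    simp only [hW]
    conv_lhs => rw [← this, wk]
  set Φ : ℕ → ℝ → ℝ := fun n c => -∫ x in a..b, h x * G (W n c (max a (x - δ n))) with hΦ
  have hΦc : ∀ n, Continuous (Φ n) := by
    intro n
    refine Continuous.neg ?_
    refine intervalIntegral.continuous_parametric_intervalIntegral_of_continuous
      (f := fun (c : ℝ) x => h x * G (W n c (max a (x - δ n)))) ?_ continuous_const
    refine (hhc.comp continuous_snd).mul (hGc.comp ?_)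
    exact (hWc n).comp (by fun_prop : Continuous (fun p : ℝ × ℝ => (p.1, max a (p.2 - δ n))))
  have main : ∀ ψ : ℕ → ℕ, StrictMono ψ → ∀ c : ℕ → ℝ, ∀ l r, (∀ n, c n ∈ Icc l r) →
      ∃ c' ∈ Icc l r, ∃ U Y, IsSol a b ρ h G c' U Y ∧ ∃ φ : ℕ → ℕ, StrictMono φ ∧
      Tendsto (fun n => Φ (ψ (φ n)) (c (φ n))) atTop (nhds (Y b)) := by
    intro ψ hψ c l r hc
    obtain ⟨c', hc', U, Y, hs, φ, hφ, -, hl⟩ := compact_sol hab hρc hhc hGc hρ hh hGB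
      (δ ∘ ψ) (fun n => hδ0 _) (hδ.comp hψ.tendsto_atTop) c hc (fun n => W (ψ n) (c n))
      (fun n => hWt _ _) (fun n t ht => hWeq _ _ t ht)
    exact ⟨c', hc', U, Y, hs, φ, hφ, hl⟩
  have e0 : ∀ᶠ n in atTop, 0 < Φ n c0 := by
    by_contra hcon
    obtain ⟨ψ, hψ, hn⟩ := extraction_of_frequently_atTop (not_eventually.1 hcon)
    obtain ⟨c', hc', U, Y, hs, φ, hφ, hl⟩ := main ψ hψ (fun _ => c0) c0 c0 (fun _ => ⟨le_rfl, le_rfl⟩)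
    have : c' = c0 := le_antisymm hc'.2 hc'.1
    subst this
    have h2 := h0 U Y hs
    have h3 := le_of_tendsto' hl (b := 0) (fun n => not_lt.1 (hn _))
    linarith
  have e1 : ∀ᶠ n in atTop, Φ n C0 < 0 := by
    by_contra hcon
    obtain ⟨ψ, hψ, hn⟩ := extraction_of_frequently_atTop (not_eventually.1 hcon)
    obtain ⟨c', hc', U, Y, hs, φ, hφ, hl⟩ := main ψ hψ (fun _ => C0) C0 C0 (fun _ => ⟨le_rfl, le_rfl⟩)
    have : c' = C0 := le_antisymm hc'.2 hc'.1
    subst this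
    have h2 := h1 U Y hs
    have h3 := ge_of_tendsto' hl (b := 0) (fun n => not_lt.1 (hn _))
    linarith
  obtain ⟨ψ, hψ, hn⟩ := extraction_of_frequently_atTop (e0.and e1).frequently
  have hex : ∀ n, ∃ c ∈ Icc c0 C0, Φ (ψ n) c = 0 := fun n =>
    intermediate_value_Icc' hcC (hΦc (ψ n)).continuousOn ⟨(hn n).2.le, (hn n).1.le⟩
  choose c hc hc2 using hex
  obtain ⟨c', hc', U, Y, hs, φ, hφ, hl⟩ := main ψ hψ c c0 C0 hc
  refine ⟨c', hc', U, Y, hs, ?_⟩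
  simp only [hc2] at hl
  exact tendsto_nhds_unique hl tendsto_const_nhds |>.symm ▸ rfl

lemma mvt_ge {f f' : ℝ → ℝ} {s t C : ℝ} (hst : s ≤ t)
    (hf : ∀ x ∈ Icc s t, HasDerivAt f (f' x) x) (hC : ∀ x ∈ Icc s t, C ≤ f' x) :
    C * (t - s) ≤ f t - f s := by
  refine (convex_Icc s t).mul_sub_le_image_sub_of_le_deriv
    (fun x hx => (hf x hx).continuousAt.continuousWithinAt)
    (fun x hx => (hf x (interior_subset hx)).differentiableAt.differentiableWithinAt)
    (fun x hx => ?_) s ⟨le_rfl, hst⟩ t ⟨hst, le_rfl⟩ hst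
  rw [(hf x (interior_subset hx)).deriv]
  exact hC x (interior_subset hx)

lemma mvt_le {f f' : ℝ → ℝ} {s t C : ℝ} (hst : s ≤ t)
    (hf : ∀ x ∈ Icc s t, HasDerivAt f (f' x) x) (hC : ∀ x ∈ Icc s t, f' x ≤ C) :
    f t - f s ≤ C * (t - s) := by
  have := mvt_ge (f := fun x => - f x) (f' := fun x => - f' x) (C := -C) hst
    (fun x hx => (hf x hx).neg) (fun x hx => neg_le_neg (hC x hx))
  linarith

lemma mvt_abs {f f' : ℝ → ℝ} {s t C : ℝ} (hst : s ≤ t)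
    (hf : ∀ x ∈ Icc s t, HasDerivAt f (f' x) x) (hC : ∀ x ∈ Icc s t, |f' x| ≤ C) :
    |f t - f s| ≤ C * (t - s) := by
  have h1 := mvt_le hst hf (fun x hx => (abs_le.1 (hC x hx)).2)
  have h2 := mvt_ge hst hf (fun x hx => (abs_le.1 (hC x hx)).1)
  exact abs_le.2 ⟨by linarith, h1⟩

def Gt (g : ℝ → ℝ) (S : ℝ) (s : ℝ) : ℝ := g (min (max s 0) S)

lemma Gt_eq {g : ℝ → ℝ} {S s : ℝ} (h : |s| ≤ S) : Gt g S s = g (max s 0) := by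
  unfold Gt
  rw [min_eq_left]
  exact max_le ((le_abs_self _).trans h) ((abs_nonneg _).trans h)

lemma Gt_nonneg {g : ℝ → ℝ} (hg : ∀ s : ℝ, 0 ≤ s → 0 ≤ g s) {S : ℝ} (hS : 0 ≤ S) (s : ℝ) :
    0 ≤ Gt g S s := hg _ (le_min (le_max_right _ _) hS)

lemma Gt_le {g : ℝ → ℝ} {K : ℝ} (hK : 0 ≤ K) (hg : ∀ s : ℝ, 0 ≤ s → g s ≤ K * s) {S : ℝ}
    (hS : 0 ≤ S) (s : ℝ) :
    Gt g S s ≤ K * max s 0 :=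
  (hg _ (le_min (le_max_right _ _) hS)).trans (mul_le_mul_of_nonneg_left (min_le_left _ _) hK)

lemma Gt_cont {g : ℝ → ℝ} (hg : ContinuousOn g (Ici 0)) {S : ℝ} (hS : 0 ≤ S) :
    Continuous (Gt g S) := by
  unfold Gt
  exact hg.comp_continuous (by fun_prop) (fun s => le_min (le_max_right _ _) hS)

/-- energy bounds for solutions -/
lemma sol_energy {a b : ℝ} {ρ h G u y : ℝ → ℝ} {c P H K : ℝ}
    (hρ : ∀ t, |ρ t| ≤ P) (hh : ∀ t, |h t| ≤ H) (hK : 0 ≤ K)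
    (hG0 : ∀ s, 0 ≤ G s) (hG : ∀ s, G s ≤ K * max s 0)
    (hs : IsSol a b ρ h G c u y) {t : ℝ} (ht : t ∈ Icc a b) :
    (u t ^ 2 + y t ^ 2 ≤ c ^ 2 * Real.exp ((P + H * K) * (b - a))) ∧
    (c ^ 2 ≤ (u t ^ 2 + y t ^ 2) * Real.exp ((P + H * K) * (b - a))) := by
  obtain ⟨hu, hy, hua, hya⟩ := hs
  have hP : 0 ≤ P := (abs_nonneg _).trans (hρ 0)
  have hH : 0 ≤ H := (abs_nonneg _).trans (hh 0)
  have hE := energy (mul_nonneg hH hK) (fun t _ => hu t) hy hρ (fun t _ => by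
    rw [abs_mul, abs_of_nonneg (hG0 _), mul_assoc]
    refine mul_le_mul (hh t) ((hG _).trans (mul_le_mul_of_nonneg_left ?_ hK)) (hG0 _) hH
    exact max_le (le_abs_self _) (abs_nonneg _)) a ⟨le_rfl, ht.1.trans ht.2⟩ t ht ht.1
  rw [hua, hya] at hE
  have hexp : Real.exp ((P + H * K) * (t - a)) ≤ Real.exp ((P + H * K) * (b - a)) := by
    apply Real.exp_le_exp.2
    exact mul_le_mul_of_nonneg_left (by linarith [ht.2]) (by positivity)
  constructor
  · refine hE.1.trans ?_
    simpa using mul_le_mul_of_nonneg_left hexp (sq_nonneg c)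
  · have := mul_le_mul_of_nonneg_left hexp (by positivity : 0 ≤ u t ^ 2 + y t ^ 2)
    simp at hE
    linarith [hE.2]

lemma sol_bound {a b : ℝ} {ρ h G u y : ℝ → ℝ} {c P H K : ℝ} (hc : 0 < c)
    (hρ : ∀ t, |ρ t| ≤ P) (hh : ∀ t, |h t| ≤ H) (hK : 0 ≤ K)
    (hG0 : ∀ s, 0 ≤ G s) (hG : ∀ s, G s ≤ K * max s 0)
    (hs : IsSol a b ρ h G c u y) {t : ℝ} (ht : t ∈ Icc a b) :
    |u t| ≤ c * Real.exp ((P + H * K) * (b - a)) := by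
  have h1 := (sol_energy hρ hh hK hG0 hG hs ht).1
  have hP : 0 ≤ P := (abs_nonneg _).trans (hρ 0)
  have hH : 0 ≤ H := (abs_nonneg _).trans (hh 0)
  set L := Real.exp ((P + H * K) * (b - a))
  have hL : 1 ≤ L := Real.one_le_exp (mul_nonneg (by positivity) (by linarith [ht.1, ht.2]))
  apply abs_le_of_sq_le_sq _ (by positivity)
  nlinarith [sq_nonneg (y t), mul_nonneg (mul_nonneg (sq_nonneg c) (by linarith : 0 ≤ L)) (by linarith : 0 ≤ L - 1)]

lemma small {a b : ℝ} (hab : a < b) {ρ h g : ℝ → ℝ} {P H K : ℝ}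
    (hρ : ∀ t, |ρ t| ≤ P) (hh : ∀ t, |h t| ≤ H) (hhc : Continuous h) (hK : 0 ≤ K)
    (hg1 : CondG1 g) (hreg : RegOscAtZero g)
    (hg0 : Tendsto (fun s => g s / s) (nhdsWithin 0 (Ioi 0)) (nhds 0))
    (hgK : ∀ s : ℝ, 0 ≤ s → g s ≤ K * s)
    (hint : ∫ x in a..b, h x < 0) :
    ∃ c1 > (0:ℝ), ∀ c, 0 < c → c < c1 → ∀ S, c * Real.exp ((P + H * K) * (b - a)) ≤ S →
      ∀ u y, IsSol a b ρ h (Gt g S) c u y → 0 < y b := by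
  have hP : 0 ≤ P := (abs_nonneg _).trans (hρ 0)
  have hH : 0 ≤ H := (abs_nonneg _).trans (hh 0)
  obtain ⟨-, hgnn, hg00, hgpos⟩ := hg1
  set L := Real.exp ((P + H * K) * (b - a)) with hLdef
  have hL0 : 0 < L := Real.exp_pos _
  set T := b - a with hT
  have hT0 : 0 < T := by simp only [hT]; linarith
  set A := -∫ x in a..b, h x with hA
  have hA0 : 0 < A := by simp only [hA]; linarith
  set ε' := A / (2 * (H * T + 1)) with hε'
  have hε'0 : 0 < ε' := by positivity
  obtain ⟨δ, hδ, η, hη, hosc⟩ := hreg ε' hε'0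
  set η' := min η (1 / 2) with hη'
  have hη'0 : 0 < η' := lt_min hη (by norm_num)
  set ε := η' / (2 * (P * H * L * T ^ 2 + 1)) with hεdef
  have hD : 0 < P * H * L * T ^ 2 + 1 := by positivity
  have hε0 : 0 < ε := by positivity
  have hεb : P * H * L * T ^ 2 * ε < η' := by
    have : (P * H * L * T ^ 2 + 1) * ε = η' / 2 := by simp only [hεdef]; field_simp
    nlinarith
  have hev : ∃ d > 0, ∀ s, 0 < s → s < d → g s ≤ ε * s := by
    have h1 := hg0.eventually (gt_mem_nhds hε0)
    rw [eventually_nhdsWithin_iff, Metric.eventually_nhds_iff] at h1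
    obtain ⟨d, hd, h2⟩ := h1
    refine ⟨d, hd, fun s hs hsd => ?_⟩
    have := h2 (y := s) (by rw [Real.dist_eq, sub_zero, abs_of_pos hs]; exact hsd) hs
    exact ((div_lt_iff₀ hs).1 this).le
  obtain ⟨d, hd, hgε⟩ := hev
  refine ⟨min δ (d / L), lt_min hδ (by positivity), fun c hc hc1 S hS u y hs => ?_⟩
  have hcδ : c < δ := hc1.trans_le (min_le_left _ _)
  have hcd : c * L < d := (lt_div_iff₀ hL0).1 (hc1.trans_le (min_le_right _ _))
  have hS0 : 0 ≤ S := le_trans (by positivity) hS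
  have hub : ∀ t ∈ Icc a b, |u t| ≤ c * L := fun t ht =>
    sol_bound hc hρ hh hK (Gt_nonneg hgnn hS0) (Gt_le hK hgK hS0) hs ht
  obtain ⟨hu, hy, hua, hya⟩ := hs
  have hGu : ∀ t ∈ Icc a b, |Gt g S (u t)| ≤ ε * (c * L) := by
    intro t ht
    rw [abs_of_nonneg (Gt_nonneg hgnn hS0 _), Gt_eq ((hub t ht).trans hS)]
    have hm : max (u t) 0 ≤ c * L := max_le ((le_abs_self _).trans (hub t ht)) (by positivity)
    rcases (le_max_right (u t) 0).eq_or_lt with h0 | h0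
    · rw [← h0, hg00]; positivity
    · exact (hgε _ h0 (hm.trans_lt hcd)).trans (mul_le_mul_of_nonneg_left hm hε0.le)
  have hyb : ∀ t ∈ Icc a b, |y t| ≤ H * (ε * (c * L)) * T := by
    intro t ht
    have := mvt_abs (f := y) (C := H * (ε * (c * L))) ht.1
      (fun x hx => hy x ⟨hx.1, hx.2.trans ht.2⟩) (fun x hx => by
        rw [abs_neg, abs_mul]
        exact mul_le_mul (hh x) (hGu x ⟨hx.1, hx.2.trans ht.2⟩) (abs_nonneg _) hH)
    rw [hya, sub_zero] at this
    exact this.trans (mul_le_mul_of_nonneg_left (by simp only [hT]; linarith [ht.2]) (by positivity))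
  have huc : ∀ t ∈ Icc a b, |u t - c| < η' * c := by
    intro t ht
    have := mvt_abs (f := u) (C := P * (H * (ε * (c * L)) * T)) ht.1
      (fun x hx => hu x) (fun x hx => by
        rw [abs_mul]
        exact mul_le_mul (hρ x) (hyb x ⟨hx.1, hx.2.trans ht.2⟩) (abs_nonneg _) hP)
    rw [hua] at this
    calc |u t - c| ≤ P * (H * (ε * (c * L)) * T) * T := this.trans
          (mul_le_mul_of_nonneg_left (by simp only [hT]; linarith [ht.2]) (by positivity))
      _ = P * H * L * T ^ 2 * ε * c := by ring
      _ < η' * c := by gcongr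
  have hgc : 0 < g c := hgpos c hc
  have hGc : ∀ t ∈ Icc a b, |Gt g S (u t) - g c| ≤ ε' * g c := by
    intro t ht
    have h1 := huc t ht
    have hupos : 0 < u t := by
      have := (abs_lt.1 h1).1
      have h2 : η' * c ≤ 1 / 2 * c := mul_le_mul_of_nonneg_right (min_le_right _ _) hc.le
      linarith
    rw [Gt_eq ((hub t ht).trans hS), max_eq_left hupos.le]
    have h2 := hosc c (u t / c) hc hcδ (by
      rw [show u t / c - 1 = (u t - c) / c by field_simp, abs_div, abs_of_pos hc, div_lt_iff₀ hc]
      exact h1.trans_le (mul_le_mul_of_nonneg_right (min_le_left _ _) hc.le))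
    rw [div_mul_cancel₀ _ hc.ne', show g (u t) / g c - 1 = (g (u t) - g c) / g c by field_simp,
      abs_div, abs_of_pos hgc, div_lt_iff₀ hgc] at h2
    exact h2.le
  have hz := mvt_abs (f := fun t => y t + g c * ∫ x in a..t, h x)
    (f' := fun t => -(h t * Gt g S (u t)) + g c * h t) (C := H * (ε' * g c)) hab.le
    (fun x hx => (hy x hx).add ((ftc hhc a x).const_mul (g c))) (fun x hx => by
      rw [show -(h x * Gt g S (u x)) + g c * h x = -(h x * (Gt g S (u x) - g c)) by ring, abs_neg,
        abs_mul]
      exact mul_le_mul (hh x) (hGc x hx) (abs_nonneg _) hH)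
  simp only [hya, intervalIntegral.integral_same, mul_zero, add_zero, sub_zero] at hz
  have h3 := (abs_le.1 hz).1
  have h4 : (H * T + 1) * ε' = A / 2 := by simp only [hε']; field_simp
  have h5 : H * (ε' * g c) * (b - a) ≤ g c * (A / 2) := by
    rw [← h4, ← hT]
    nlinarith [mul_pos hgc hε'0]
  have h6 : g c * ∫ x in a..b, h x = - (g c * A) := by simp only [hA]; ring
  rw [h6] at h3
  nlinarith [mul_pos hgc hA0]

lemma large {a b : ℝ} (hab : a < b) {ρ h g : ℝ → ℝ} {P H K r1 α d κ m M0 : ℝ}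
    (hρc : Continuous ρ) (hr1 : 0 < r1) (hρr : ∀ t, r1 ≤ ρ t)
    (hρ : ∀ t, |ρ t| ≤ P) (hh : ∀ t, |h t| ≤ H) (hK : 0 ≤ K)
    (hg1 : CondG1 g) (hgK : ∀ s : ℝ, 0 ≤ s → g s ≤ K * s)
    (hm : 0 < m) (hM0 : 0 < M0) (hgm : ∀ s, M0 ≤ s → m * s ≤ g s)
    (hd : 0 < d) (hα : a ≤ α) (hβ : α + 4 * d ≤ b) (hκ : 0 < κ)
    (hhκ : ∀ t ∈ Icc α (α + 4 * d), κ ≤ h t)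
    (hbig : 1 < κ * m * d ^ 2 * r1) :
    ∃ C1 > (0:ℝ), ∀ c, C1 < c → ∀ S, c * Real.exp ((P + H * K) * (b - a)) ≤ S →
      ∀ u y, IsSol a b ρ h (Gt g S) c u y → y b < 0 := by
  obtain ⟨-, hgnn, hg00, hgpos⟩ := hg1
  set L := Real.exp ((P + H * K) * (b - a)) with hLdef
  have hL0 : 0 < L := Real.exp_pos _
  set k := 1 / (r1 * d) with hk
  have hk0 : 0 < k := by positivity
  refine ⟨(1 + k ^ 2) * M0 ^ 2 * L + 1, by positivity, fun c hc1 S hS u y hs => ?_⟩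
  have hc : 1 < c := lt_of_le_of_lt (by nlinarith [show 0 ≤ (1 + k ^ 2) * M0 ^ 2 * L by positivity]) hc1
  have hc0 : 0 < c := by linarith
  have hS0 : 0 ≤ S := le_trans (by positivity) hS
  have hub : ∀ t ∈ Icc a b, |u t| ≤ c * L := fun t ht =>
    sol_bound hc0 hρ hh hK (Gt_nonneg hgnn hS0) (Gt_le hK hgK hS0) hs ht
  have hEn : ∀ t ∈ Icc a b, c ^ 2 ≤ (u t ^ 2 + y t ^ 2) * L := fun t ht =>
    (sol_energy hρ hh hK (Gt_nonneg hgnn hS0) (Gt_le hK hgK hS0) hs ht).2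
  by_contra hcon
  have hpos : ∀ t ∈ Icc a b, 0 < u t := by
    intro t ht
    by_contra h
    exact hcon (touch hab hc0 hρc (fun t => hr1.trans_le (hρr t)) hρ hh hK (Gt_nonneg hgnn hS0)
      (Gt_le hK hgK hS0) hs ht (not_lt.1 h))
  obtain ⟨hu, hy, hua, hya⟩ := hs
  have hJ : ∀ t ∈ Icc α (α + 4 * d), t ∈ Icc a b := fun t ht => ⟨hα.trans ht.1, ht.2.trans hβ⟩
  have hyanti : ∀ s t, α ≤ s → s ≤ t → t ≤ α + 4 * d → y t ≤ y s := by
    intro s t h1 h2 h3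
    have := mvt_le (f := y) (C := 0) h2 (fun x hx => hy x (hJ x ⟨h1.trans hx.1, hx.2.trans h3⟩))
      (fun x hx => by
        have := hhκ x ⟨h1.trans hx.1, hx.2.trans h3⟩
        have h4 := Gt_nonneg hgnn hS0 (u x)
        have : 0 ≤ h x * Gt g S (u x) := mul_nonneg (by linarith) h4
        linarith)
    linarith
  have hmid : ∀ t ∈ Icc (α + d) (α + 3 * d), |y t| ≤ k * u t := by
    intro t ht
    have hkd : k * (r1 * d) = 1 := by simp only [hk]; field_simp
    have hut := hpos t (hJ t ⟨by linarith [ht.1], by linarith [ht.2]⟩)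
    rcases le_total 0 (y t) with h0 | h0
    · rw [abs_of_nonneg h0]
      have h1 := mvt_ge (f := u) (C := r1 * y t) (s := α) (t := t) (by linarith [ht.1])
        (fun x _ => hu x) (fun x hx => by
          have h2 := hyanti x t hx.1 hx.2 (by linarith [ht.2])
          exact mul_le_mul (hρr x) h2 h0 (hr1.le.trans (hρr x)))
      have h3 := hpos α (hJ α ⟨le_rfl, by linarith⟩)
      have h4 : r1 * y t * d ≤ r1 * y t * (t - α) :=
        mul_le_mul_of_nonneg_left (by linarith [ht.1]) (by positivity)
      have h5 : r1 * y t * d ≤ u t := by linarith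
      calc y t = k * (r1 * y t * d) := by linear_combination (- y t) * hkd
        _ ≤ k * u t := by gcongr
    · rw [abs_of_nonpos h0]
      have h1 := mvt_le (f := u) (C := r1 * y t) (s := t) (t := α + 4 * d) (by linarith [ht.2])
        (fun x _ => hu x) (fun x hx => by
          have h2 := hyanti t x (by linarith [ht.1]) hx.1 hx.2
          have h6 := hρr x
          nlinarith)
      have h3 := hpos (α + 4 * d) (hJ _ ⟨by linarith, le_rfl⟩)
      have h4 : r1 * (-y t) * d ≤ r1 * (-y t) * (α + 4 * d - t) :=
        mul_le_mul_of_nonneg_left (by linarith [ht.2]) (mul_nonneg hr1.le (by linarith))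
      have h5 : r1 * (-y t) * d ≤ u t := by linarith
      calc -y t = k * (r1 * (-y t) * d) := by linear_combination (y t) * hkd
        _ ≤ k * u t := by gcongr
  have hmJ : ∀ t ∈ Icc (α + d) (α + 3 * d), t ∈ Icc α (α + 4 * d) := fun t ht =>
    ⟨by linarith [ht.1], by linarith [ht.2]⟩
  have hbigu : ∀ t ∈ Icc (α + d) (α + 3 * d), M0 ≤ u t := by
    intro t ht
    by_contra hlt
    have hlt := not_le.1 hlt
    have hut := hpos t (hJ t (hmJ t ht))
    have h1 := hEn t (hJ t (hmJ t ht))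
    have h2 : y t ^ 2 ≤ k ^ 2 * u t ^ 2 := by
      rw [← mul_pow]; exact sq_le_sq' (by linarith [(abs_le.1 (hmid t ht)).1]) (abs_le.1 (hmid t ht)).2
    have h3 : u t ^ 2 ≤ M0 ^ 2 := by gcongr
    have h4 : u t ^ 2 + y t ^ 2 ≤ (1 + k ^ 2) * M0 ^ 2 := by nlinarith [sq_nonneg k]
    have h5 := mul_le_mul_of_nonneg_right h4 hL0.le
    nlinarith
  have hz := mvt_le (f := fun t => y t / u t)
    (f' := fun t => (-(h t * Gt g S (u t)) * u t - y t * (ρ t * y t)) / u t ^ 2)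
    (s := α + d) (t := α + 3 * d) (C := -(κ * m)) (by linarith)
    (fun x hx => (hy x (hJ x (hmJ x hx))).div (hu x) (hpos x (hJ x (hmJ x hx))).ne')
    (fun x hx => by
      have hux := hpos x (hJ x (hmJ x hx))
      rw [div_le_iff₀ (by positivity)]
      have h1 : Gt g S (u x) = g (u x) := by
        rw [Gt_eq ((hub x (hJ x (hmJ x hx))).trans hS), max_eq_left hux.le]
      rw [h1]
      have h2 := hgm _ (hbigu x hx)
      have h3 := hhκ x (hmJ x hx)
      have h4 : κ * (m * u x) ≤ h x * g (u x) :=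
        mul_le_mul h3 h2 (by positivity) (hκ.le.trans h3)
      have h5 : 0 ≤ ρ x * y x ^ 2 := mul_nonneg (hr1.le.trans (hρr x)) (sq_nonneg _)
      nlinarith [mul_le_mul_of_nonneg_right h4 hux.le])
  have hzb : ∀ t ∈ Icc (α + d) (α + 3 * d), |y t / u t| ≤ k := by
    intro t ht
    have hut := hpos t (hJ t (hmJ t ht))
    rw [abs_div, abs_of_pos hut, div_le_iff₀ hut]
    exact hmid t ht
  have b1 := (abs_le.1 (hzb (α + d) ⟨le_rfl, by linarith⟩)).2
  have b2 := (abs_le.1 (hzb (α + 3 * d) ⟨by linarith, le_rfl⟩)).1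
  have h7 : κ * m * d ≤ k := by nlinarith
  have h8 : κ * m * d ^ 2 * r1 ≤ k * (r1 * d) := by
    have := mul_le_mul_of_nonneg_right h7 (by positivity : 0 ≤ r1 * d)
    nlinarith
  have h9 : k * (r1 * d) = 1 := by simp only [hk]; field_simp
  linarith

lemma growth_up {g : ℝ → ℝ} (hg1 : CondG1 g)
    (hg0 : Tendsto (fun s => g s / s) (nhdsWithin 0 (Ioi 0)) (nhds 0))
    (hsup : GrowthLimsup g < ⊤) : ∃ K, 0 ≤ K ∧ ∀ s : ℝ, 0 ≤ s → g s ≤ K * s := by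
  obtain ⟨hgc, hgnn, hg00, hgpos⟩ := hg1
  obtain ⟨k1, hk1, -⟩ := EReal.lt_iff_exists_real_btwn.1 hsup
  have e1 := eventually_lt_of_limsup_lt hk1
  obtain ⟨S, hS⟩ := eventually_atTop.1 e1
  have h1 := hg0.eventually (gt_mem_nhds one_pos)
  rw [eventually_nhdsWithin_iff, Metric.eventually_nhds_iff] at h1
  obtain ⟨d, hd, h2⟩ := h1
  have hcont : ContinuousOn (fun s => g s / s) (Icc d (max d S)) := by
    apply ContinuousOn.div (hgc.mono fun x hx => hd.le.trans hx.1) continuousOn_id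
    intro x hx
    exact (hd.trans_le hx.1).ne'
  obtain ⟨k2, hk2⟩ := (isCompact_Icc.image_of_continuousOn hcont).bddAbove
  refine ⟨max 1 (max k1 k2), le_trans zero_le_one (le_max_left _ _), fun s hs => ?_⟩
  rcases hs.eq_or_lt with h0 | h0
  · rw [← h0, hg00, mul_zero]
  · rw [← div_le_iff₀ h0]
    rcases lt_or_ge s d with h3 | h3
    · exact (h2 (y := s) (by rw [Real.dist_eq, sub_zero, abs_of_pos h0]; exact h3) h0).le.trans
        (le_max_left _ _)
    · rcases le_total s S with h4 | h4
      · exact (hk2 ⟨s, ⟨h3, h4.trans (le_max_right _ _)⟩, rfl⟩).trans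
          ((le_max_right _ _).trans (le_max_right _ _))
      · exact (EReal.coe_lt_coe_iff.1 (hS s h4)).le.trans
          ((le_max_left _ _).trans (le_max_right _ _))

lemma growth_low {g : ℝ → ℝ} (hinf : (0 : EReal) < GrowthLiminf g) :
    ∃ m > (0:ℝ), ∃ M0 > (0:ℝ), ∀ s, M0 ≤ s → m * s ≤ g s := by
  obtain ⟨m, hm, hm2⟩ := EReal.lt_iff_exists_real_btwn.1 hinf
  have e1 := eventually_lt_of_lt_liminf hm2
  obtain ⟨S, hS⟩ := eventually_atTop.1 e1
  refine ⟨m, EReal.coe_pos.1 hm, max 1 S, by positivity, fun s hs => ?_⟩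
  have hs0 : 0 < s := lt_of_lt_of_le one_pos ((le_max_left _ _).trans hs)
  rw [← le_div_iff₀ hs0]
  exact (EReal.coe_lt_coe_iff.1 (hS s ((le_max_right _ _).trans hs))).le

/-- Theorem: for `N ≥ 2`, `0 < R₁ < R₂`, a continuous radial weight `Q` with
`∫ r^{N−1} Q(r) dr < 0` and `Q(r₀) > 0` for some `r₀ ∈ (R₁,R₂)`, and `g`
satisfying (g1), regularly oscillating at zero, with `g(s)/s → 0` as `s → 0⁺`
and `0 < liminf_{s→+∞} g(s)/s ≤ limsup_{s→+∞} g(s)/s < +∞`, the Neumann problem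
`−Δu = ν Q(‖x‖) g(u)` on the annulus has a positive radially symmetric solution
for every sufficiently large `ν`. -/
theorem statement_13
    (N : ℕ) (hN : 2 ≤ N) (R₁ R₂ : ℝ) (hR1 : 0 < R₁) (hR12 : R₁ < R₂)
    (Q : ℝ → ℝ) (hQc : ContinuousOn Q (Icc R₁ R₂))
    (hq2 : (∫ r in R₁..R₂, r ^ (N - 1) * Q r) < 0)
    (hq0 : ∃ r₀ ∈ Ioo R₁ R₂, 0 < Q r₀)
    (g : ℝ → ℝ) (hg1 : CondG1 g) (hreg : RegOscAtZero g)
    (hg0 : Tendsto (fun s => g s / s) (nhdsWithin 0 (Ioi 0)) (nhds 0))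
    (hinf : (0 : EReal) < GrowthLiminf g)
    (hsup : GrowthLimsup g < ⊤) :
    ∃ νs : ℝ, 0 < νs ∧ ∀ ν : ℝ, νs < ν →
      RadialNeumannPosSol N R₁ R₂ (fun r => ν * Q r) g := by
  obtain ⟨K, hK, hgK⟩ := growth_up hg1 hg0 hsup
  obtain ⟨m, hm, M0, hM0, hgm⟩ := growth_low hinf
  obtain ⟨r₀, hr₀, hQr⟩ := hq0
  -- clipped coefficients
  set cl : ℝ → ℝ := fun t => (projIcc R₁ R₂ hR12.le t : ℝ) with hcl
  have hclc : Continuous cl := continuous_subtype_val.comp continuous_projIcc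
  have hclm : ∀ t, cl t ∈ Icc R₁ R₂ := fun t => (projIcc R₁ R₂ hR12.le t).2
  have hcle : ∀ t ∈ Icc R₁ R₂, cl t = t := fun t ht => by
    simp only [hcl, projIcc_of_mem hR12.le ht]
  set p : ℝ → ℝ := fun t => cl t ^ (N - 1) with hp
  have hpc : Continuous p := hclc.pow _
  set p1 := R₁ ^ (N - 1) with hp1
  set p2 := R₂ ^ (N - 1) with hp2
  have hp10 : 0 < p1 := by positivity
  have hR2 : 0 < R₂ := hR1.trans hR12
  have hp20 : 0 < p2 := by positivity
  have hpl : ∀ t, p1 ≤ p t := fun t => pow_le_pow_left₀ hR1.le (hclm t).1 _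
  have hpu : ∀ t, p t ≤ p2 := fun t => pow_le_pow_left₀ (hR1.le.trans (hclm t).1) (hclm t).2 _
  have hp0 : ∀ t, 0 < p t := fun t => hp10.trans_le (hpl t)
  set ρ : ℝ → ℝ := fun t => (p t)⁻¹ with hρd
  have hρc : Continuous ρ := hpc.inv₀ fun t => (hp0 t).ne'
  have hρr : ∀ t, p2⁻¹ ≤ ρ t := fun t => inv_anti₀ (hp0 t) (hpu t)
  have hρ : ∀ t, |ρ t| ≤ p1⁻¹ := fun t => by
    rw [abs_of_pos (inv_pos.2 (hp0 t))]
    exact inv_anti₀ hp10 (hpl t)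
  set q : ℝ → ℝ := fun t => Q (cl t) with hq
  have hqc : Continuous q := hQc.comp_continuous hclc hclm
  have hqe : ∀ t ∈ Icc R₁ R₂, q t = Q t := fun t ht => by simp only [hq, hcle t ht]
  -- interval of positivity
  have hex : ∃ d > 0, R₁ ≤ r₀ - 2 * d ∧ r₀ + 2 * d ≤ R₂ ∧
      ∀ t ∈ Icc (r₀ - 2 * d) (r₀ + 2 * d), Q r₀ / 2 ≤ q t := by
    have hq0 : Q r₀ / 2 < q r₀ := by rw [hqe r₀ ⟨hr₀.1.le, hr₀.2.le⟩]; linarith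
    have h1 := (hqc.tendsto r₀).eventually (lt_mem_nhds hq0)
    rw [Metric.eventually_nhds_iff] at h1
    obtain ⟨e, he, h2⟩ := h1
    refine ⟨min (e / 4) (min ((r₀ - R₁) / 2) ((R₂ - r₀) / 2)), ?_, ?_, ?_, ?_⟩
    · exact lt_min (by positivity) (lt_min (by linarith [hr₀.1]) (by linarith [hr₀.2]))
    · have := (min_le_right (e / 4) (min ((r₀ - R₁) / 2) ((R₂ - r₀) / 2))).trans (min_le_left _ _)
      linarith
    · have := (min_le_right (e / 4) (min ((r₀ - R₁) / 2) ((R₂ - r₀) / 2))).trans (min_le_right _ _)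
      linarith
    · intro t ht
      have := min_le_left (e / 4) (min ((r₀ - R₁) / 2) ((R₂ - r₀) / 2))
      refine (h2 ?_).le
      rw [Real.dist_eq, abs_lt]
      constructor <;> linarith [ht.1, ht.2]
  obtain ⟨d, hd, hd1, hd2, hqd⟩ := hex
  set D := p1 * (Q r₀ / 2) * m * d ^ 2 * p2⁻¹ with hD
  have hD0 : 0 < D := by positivity
  refine ⟨1 / D, by positivity, fun ν hν => ?_⟩
  have hν0 : 0 < ν := lt_trans (by positivity) hν
  have hνD : 1 < ν * D := (div_lt_iff₀ hD0).1 hν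
  set h : ℝ → ℝ := fun t => ν * (p t * q t) with hh0
  have hhc : Continuous h := continuous_const.mul (hpc.mul hqc)
  obtain ⟨H, hH⟩ : ∃ H, ∀ t, |h t| ≤ H := by
    obtain ⟨B, hB⟩ := (isCompact_Icc.image_of_continuousOn
      (hhc.continuousOn (s := Icc R₁ R₂)).abs).bddAbove
    refine ⟨B, fun t => ?_⟩
    have h2 : cl (cl t) = cl t := hcle _ (hclm t)
    have h3 : h (cl t) = h t := by simp only [hh0, hp, hq, h2]
    rw [← h3]
    exact hB ⟨cl t, hclm t, rfl⟩
  have hint : ∫ x in R₁..R₂, h x < 0 := by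
    have : ∫ x in R₁..R₂, h x = ν * ∫ r in R₁..R₂, r ^ (N - 1) * Q r := by
      rw [← intervalIntegral.integral_const_mul]
      apply intervalIntegral.integral_congr
      intro x hx
      rw [uIcc_of_le hR12.le] at hx
      simp only [hh0, hp, hq, hcle x hx]
    rw [this]
    exact mul_neg_of_pos_of_neg hν0 hq2
  obtain ⟨c1, hc1, hsmall⟩ := small hR12 hρ hH hhc hK hg1 hreg hg0 hgK hint
  obtain ⟨C1, hC1, hlarge⟩ := large hR12 (α := r₀ - 2 * d) (d := d) (κ := ν * (p1 * (Q r₀ / 2)))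
    hρc (inv_pos.2 hp20) hρr hρ hH hK hg1 hgK hm hM0 hgm hd hd1 (by linarith) (by positivity)
    (fun t ht => by
      have h1 := hqd t ⟨ht.1, by linarith [ht.2]⟩
      have h2 : p1 * (Q r₀ / 2) ≤ p t * q t := mul_le_mul (hpl t) h1 (by positivity) (hp0 t).le
      exact mul_le_mul_of_nonneg_left h2 hν0.le)
    (by
      have : ν * (p1 * (Q r₀ / 2)) * m * d ^ 2 * p2⁻¹ = ν * D := by simp only [hD]; ring
      rw [this]; exact hνD)
  set L := Real.exp ((p1⁻¹ + H * K) * (R₂ - R₁)) with hL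
  have hL0 : 0 < L := Real.exp_pos _
  set c0 := min (c1 / 2) C1 with hc0d
  have hc0 : 0 < c0 := lt_min (by positivity) hC1
  set C0 := C1 + 1 with hC0d
  have hcC : c0 ≤ C0 := (min_le_right _ _).trans (by linarith)
  set S := C0 * L with hSd
  have hS0 : 0 ≤ S := by positivity
  have hgnn := hg1.2.1
  have hGnn := Gt_nonneg hgnn hS0
  have hGle := Gt_le hK hgK hS0
  have hGB : ∀ t, |Gt g S t| ≤ K * S := fun t => by
    rw [abs_of_nonneg (hGnn t)]
    exact (hgK _ (le_min (le_max_right _ _) hS0)).trans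
      (mul_le_mul_of_nonneg_left (min_le_right _ _) hK)
  obtain ⟨c, hc, u, y, hs, hyb⟩ := shooting hR12 hρc hhc (Gt_cont hg1.1 hS0) hρ hH hGB hcC
    (hsmall c0 hc0 (by linarith [min_le_left (c1 / 2) C1]) S
      (mul_le_mul_of_nonneg_right hcC hL0.le))
    (hlarge C0 (by linarith) S le_rfl)
  have hcpos : 0 < c := hc0.trans_le hc.1
  have hpos : ∀ t ∈ Icc R₁ R₂, 0 < u t := by
    intro t ht
    by_contra hle
    have := touch hR12 hcpos hρc (fun t => inv_pos.2 (hp0 t)) hρ hH hK hGnn hGle hs ht (not_lt.1 hle)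
    linarith
  have hGu : ∀ t ∈ Icc R₁ R₂, Gt g S (u t) = g (u t) := by
    intro t ht
    have h1 := sol_bound hcpos hρ hH hK hGnn hGle hs ht
    rw [Gt_eq (h1.trans (mul_le_mul_of_nonneg_right hc.2 hL0.le)), max_eq_left (hpos t ht).le]
  obtain ⟨hu, hy, hua, hya⟩ := hs
  have huc : Continuous u := continuous_iff_continuousAt.2 fun t => (hu t).continuousAt
  have hyc : ContinuousOn y (Icc R₁ R₂) := fun t ht => (hy t ht).continuousAt.continuousWithinAt
  have hpe : ∀ t ∈ Icc R₁ R₂, p t = t ^ (N - 1) := fun t ht => by simp only [hp, hcle t ht]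
  refine ⟨u, fun t => y t / t ^ (N - 1), fun t => -(ν * Q t * g (u t)) -
    (((N : ℝ) - 1) / t) * (y t / t ^ (N - 1)), ?_, ?_, ?_, hpos, ?_, ?_, ?_⟩
  · intro t ht
    refine ((hu t).congr_deriv ?_).hasDerivWithinAt
    simp only [hρd, hpe t ht]
    rw [mul_comm, div_eq_mul_inv]
  · intro t ht
    have ht0 : 0 < t := hR1.trans_le ht.1
    have hpow : HasDerivAt (fun t : ℝ => t ^ (N - 1)) (((N - 1 : ℕ) : ℝ) * t ^ (N - 1 - 1)) t :=
      hasDerivAt_pow _ _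
    refine (((hy t ht).div hpow (by positivity)).congr_deriv ?_).hasDerivWithinAt
    rw [hGu t ht]
    simp only [hh0, hpe t ht, hqe t ht]
    obtain ⟨n, rfl⟩ : ∃ n, N = n + 2 := ⟨N - 2, by omega⟩
    simp only [show n + 2 - 1 = n + 1 by omega, show n + 1 - 1 = n by omega]
    push_cast
    field_simp
    ring
  · have hgu : ContinuousOn (fun t => g (u t)) (Icc R₁ R₂) :=
      hg1.1.comp huc.continuousOn fun t ht => (hpos t ht).le
    have hne : ∀ t ∈ Icc R₁ R₂, t ≠ 0 := fun t ht => (hR1.trans_le ht.1).ne'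
    refine ((continuousOn_const.mul hQc).mul hgu).neg.sub
      ((continuousOn_const.div continuousOn_id hne).mul
        (hyc.div (continuousOn_id.pow _) fun t ht => pow_ne_zero _ (hne t ht)))
  · intro t ht
    ring
  · simp [hya]
  · simp [hyb]
end
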